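/- arXiv:2209.14505 — 8 statements merged into one kernel-verified Lean document; each statement's English description precedes it below -/
import Mathlib

section
/- (Lemma 1, existence.) If τs ≤ τb, then the prosumer's problem has an optimal solution: there exists (l*, g*, zs*, zb*) ∈ Xpro such that f(l*, g*, zs*, zb*) ≥ f(l, g, zs, zb) for every (l, g, zs, zb) ∈ Xpro. -/
/-- Prosumer objective: `x = (l, g, zs, zb)`. -/
noncomputable def fpro (P0 Q0 α p τs τb φ : ℝ) (C : ℝ → ℝ) (x : ℝ × ℝ × ℝ × ℝ) : ℝ :=
  (p + τs) * x.2.2.1 - (p + τb) * x.2.2.2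
    + (∫ m in (0:ℝ)..x.1, (P0 - (P0 / (α * Q0)) * m)) - C x.2.1 - φ

/-- Prosumer feasible set: `x = (l, g, zs, zb)`. -/
def Xpro (R G : ℝ) : Set (ℝ × ℝ × ℝ × ℝ) :=
  {x | 0 ≤ x.1 ∧ 0 ≤ x.2.1 ∧ 0 ≤ x.2.2.1 ∧ 0 ≤ x.2.2.2 ∧
       x.1 + x.2.2.1 - x.2.2.2 - x.2.1 - R = 0 ∧ x.2.1 ≤ G}

theorem fpro_eq (P0 Q0 α p τs τb φ : ℝ) (C : ℝ → ℝ) (l g zs zb : ℝ) :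
    fpro P0 Q0 α p τs τb φ C (l, g, zs, zb) =
      (p + τs) * zs - (p + τb) * zb + (P0 * l - (P0 / (α * Q0)) * (l ^ 2 / 2)) - C g - φ := by
  have h : (∫ m in (0:ℝ)..l, (P0 - (P0 / (α * Q0)) * m))
      = P0 * l - (P0 / (α * Q0)) * (l ^ 2 / 2) := by
    have h1 : IntervalIntegrable (fun _ : ℝ => P0) MeasureTheory.volume 0 l :=
      Continuous.intervalIntegrable (by fun_prop) _ _
    have h2 : IntervalIntegrable (fun m : ℝ => (P0 / (α * Q0)) * m) MeasureTheory.volume 0 l :=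
      Continuous.intervalIntegrable (by fun_prop) _ _
    rw [intervalIntegral.integral_sub h1 h2, intervalIntegral.integral_const_mul, integral_id,
      intervalIntegral.integral_const, smul_eq_mul]
    ring
  simp only [fpro, h]

/-- (Lemma 1, existence.) If `τs ≤ τb`, the prosumer's problem has an optimal solution. -/
theorem prosumer_optimal_exists
    (P0 Q0 α R G p τs τb φ : ℝ)
    (hP0 : 0 < P0) (hQ0 : 0 < Q0) (hα0 : 0 < α) (hα1 : α < 1)
    (hR : 0 < R) (hG : 0 ≤ G) (hp : 0 ≤ p)
    (C : ℝ → ℝ) (hC : ContDiff ℝ 1 C) (hCconv : ConvexOn ℝ Set.univ C)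
    (hτ : τs ≤ τb) :
    ∃ x ∈ Xpro R G, ∀ y ∈ Xpro R G,
      fpro P0 Q0 α p τs τb φ C y ≤ fpro P0 Q0 α p τs τb φ C x := by
  obtain ⟨k, hk⟩ : ∃ k, k = P0 / (α * Q0) := ⟨_, rfl⟩
  have hkpos : 0 < k := by rw [hk]; positivity
  obtain ⟨L, hL1, hL2⟩ : ∃ L, R + G ≤ L ∧ P0 - (p + τb) ≤ k * L := by
    refine ⟨max (R + G) ((P0 - (p + τb)) / k), le_max_left _ _, ?_⟩
    calc P0 - (p + τb) = k * ((P0 - (p + τb)) / k) := by field_simp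
      _ ≤ _ := mul_le_mul_of_nonneg_left (le_max_right _ _) hkpos.le
  have hL0 : 0 ≤ L := by linarith
  have hCc : Continuous C := hC.continuous
  obtain ⟨h, hh⟩ : ∃ h : ℝ × ℝ → ℝ, h = fun q =>
    (p + τs) * max (q.2 + R - q.1) 0 - (p + τb) * max (q.1 - q.2 - R) 0
      + (P0 * q.1 - k * (q.1 ^ 2 / 2)) - C q.2 - φ := ⟨_, rfl⟩
  have hcont : Continuous h := by rw [hh]; fun_prop
  obtain ⟨⟨a, b⟩, ⟨⟨ha0, haL⟩, hb0, hbG⟩, hmax⟩ :=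
    ((isCompact_Icc (a := (0:ℝ)) (b := L)).prod (isCompact_Icc (a := (0:ℝ)) (b := G))).exists_isMaxOn
      ⟨(0, 0), ⟨le_rfl, hL0⟩, le_rfl, hG⟩ hcont.continuousOn
  simp only at ha0 haL hb0 hbG
  refine ⟨(a, b, max (b + R - a) 0, max (a - b - R) 0),
    ⟨ha0, hb0, le_max_right _ _, le_max_right _ _, ?_, hbG⟩, ?_⟩
  · simp only
    rcases le_total (b + R - a) 0 with h1 | h1
    · rw [max_eq_right h1, max_eq_left (by linarith)]; ring
    · rw [max_eq_left h1, max_eq_right (by linarith)]; ring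
  rintro ⟨l, g, zs, zb⟩ ⟨hl, hg, hzs, hzb, he, hgG⟩
  simp only at hl hg hzs hzb he hgG
  rw [fpro_eq, fpro_eq, ← hk]
  have step1 : (p + τs) * zs - (p + τb) * zb + (P0 * l - k * (l ^ 2 / 2)) - C g - φ
      ≤ h (l, g) := by
    rw [hh]
    simp only
    rcases le_total (g + R - l) 0 with h1 | h1
    · rw [max_eq_right h1, max_eq_left (by linarith)]
      obtain rfl : zb = l + zs - g - R := by linarith
      nlinarith [mul_nonneg hzs (sub_nonneg.2 hτ)]
    · rw [max_eq_left h1, max_eq_right (by linarith)]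
      obtain rfl : zs = zb + g + R - l := by linarith
      nlinarith [mul_nonneg hzb (sub_nonneg.2 hτ)]
  have step2 : h (l, g) ≤ h (a, b) := by
    rcases le_total l L with h1 | h1
    · exact hmax (show (l, g) ∈ _ from ⟨⟨hl, h1⟩, hg, hgG⟩)
    · refine le_trans ?_ (hmax (show (L, g) ∈ _ from ⟨⟨hL0, le_rfl⟩, hg, hgG⟩))
      rw [hh]
      simp only
      rw [max_eq_right (by linarith), max_eq_left (by linarith),
        max_eq_right (by linarith), max_eq_left (by linarith)]
      nlinarith [mul_nonneg (sub_nonneg.2 h1) (sub_nonneg.2 hL2),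
        mul_nonneg hkpos.le (mul_self_nonneg (l - L))]
  have step3 := step1.trans step2
  rw [hh] at step3
  exact step3
end

section
/- (Lemma 1, no simultaneous buying and selling.) If τs < τb, then every optimal solution (l*, g*, zs*, zb*) of the prosumer's problem satisfies zs*·zb* = 0. -/
/-- (Lemma 1, no simultaneous buying and selling.) If `τs < τb`, every optimal solution
`(l*, g*, zs*, zb*)` of the prosumer's problem satisfies `zs* * zb* = 0`. -/
theorem prosumer_no_simultaneous_buy_sell
    (P0 Q0 α R G p τs τb φ : ℝ)
    (hP0 : 0 < P0) (hQ0 : 0 < Q0) (hα0 : 0 < α) (hα1 : α < 1)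
    (hR : 0 < R) (hG : 0 ≤ G) (hp : 0 ≤ p)
    (C : ℝ → ℝ) (hC : ContDiff ℝ 1 C) (hCconv : ConvexOn ℝ Set.univ C)
    (hτ : τs < τb) :
    ∀ x ∈ Xpro R G,
      (∀ y ∈ Xpro R G, fpro P0 Q0 α p τs τb φ C y ≤ fpro P0 Q0 α p τs τb φ C x) →
      x.2.2.1 * x.2.2.2 = 0 := by
  rintro ⟨l, g, zs, zb⟩ ⟨h1, h2, h3, h4, h5, h6⟩ hopt
  dsimp only at h1 h2 h3 h4 h5 h6 ⊢
  by_contra hne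
  have hs : 0 < zs := lt_of_le_of_ne h3 (fun h => hne (by rw [← h, zero_mul]))
  have hb : 0 < zb := lt_of_le_of_ne h4 (fun h => hne (by rw [← h, mul_zero]))
  -- reduce both trades by their minimum
  have hm : 0 < min zs zb := lt_min hs hb
  have hms : min zs zb ≤ zs := min_le_left _ _
  have hmb : min zs zb ≤ zb := min_le_right _ _
  have key := hopt (l, g, zs - min zs zb, zb - min zs zb)
    ⟨h1, h2, by dsimp only; linarith, by dsimp only; linarith,
      by dsimp only; linarith, h6⟩
  simp only [fpro] at key
  nlinarith [mul_pos hm (sub_pos.mpr hτ)]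
end

section
/- (Coercivity of the prosumer objective, proof step of Lemma 1.) If τs < τb, then f is coercive on Xpro: for every sequence (xₙ) of points of Xpro with ‖xₙ‖ → ∞, one has f(xₙ) → −∞. -/
open Filter

/-- (Coercivity of the prosumer objective.) If `τs < τb`, then `f` is coercive on `Xpro`:
along every sequence of feasible points whose norm tends to `∞`, `f` tends to `-∞`. -/
theorem prosumer_objective_coercive
    (P0 Q0 α R G p τs τb φ : ℝ)
    (hP0 : 0 < P0) (hQ0 : 0 < Q0) (hα0 : 0 < α) (hα1 : α < 1)
    (hR : 0 < R) (hG : 0 ≤ G) (hp : 0 ≤ p)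
    (C : ℝ → ℝ) (hC : ContDiff ℝ 1 C) (hCconv : ConvexOn ℝ Set.univ C)
    (hτ : τs < τb)
    (x : ℕ → ℝ × ℝ × ℝ × ℝ) (hx : ∀ n, x n ∈ Xpro R G)
    (hnorm : Tendsto (fun n => ‖x n‖) atTop atTop) :
    Tendsto (fun n => fpro P0 Q0 α p τs τb φ C (x n)) atTop atBot := by
  obtain ⟨g0, -, hg0⟩ := (isCompact_Icc (a := (0:ℝ)) (b := G)).exists_isMinOn
    (Set.nonempty_Icc.2 hG) hC.continuous.continuousOn
  set k : ℝ := P0 / (α * Q0) with hk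
  have hkpos : 0 < k := by positivity
  set δ : ℝ := τb - τs with hδ
  have hδpos : 0 < δ := sub_pos.2 hτ
  set D : ℝ := P0 - (p + τs) + δ with hD
  set A : ℝ := D ^ 2 / (2 * k) + |p + τs| * G + (p + τs) * R - C g0 - φ + δ * (G + R) with hA
  have key : ∀ n, fpro P0 Q0 α p τs τb φ C (x n) ≤ A + (-δ) * ‖x n‖ := by
    intro n
    have h := hx n
    generalize x n = y at h ⊢
    rcases y with ⟨l, g, zs, zb⟩
    obtain ⟨hl, hg, hzs, hzb, hbal, hgG⟩ := h
    change 0 ≤ l at hl; change 0 ≤ g at hg; change 0 ≤ zs at hzs; change 0 ≤ zb at hzb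
    change l + zs - zb - g - R = 0 at hbal; change g ≤ G at hgG
    have hCg : C g0 ≤ C g := hg0 ⟨hg, hgG⟩
    have hint : (∫ m in (0:ℝ)..l, (P0 - k * m)) = P0 * l - k * l ^ 2 / 2 := by
      rw [intervalIntegral.integral_sub (by simp) (by
        exact (continuous_const.mul continuous_id).intervalIntegrable _ _)]
      have e : (∫ m in (0:ℝ)..l, k * m) = k * ((l ^ 2 - 0 ^ 2) / 2) := by
        rw [intervalIntegral.integral_const_mul, integral_id]
      have e' : (∫ m in (0:ℝ)..l, P0) = l * P0 := by simp
      refine (congrArg₂ (fun a b : ℝ => a - b) e' e).trans ?_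
      ring
    have hn : ‖((l, g, zs, zb) : ℝ × ℝ × ℝ × ℝ)‖ ≤ zb + l + G + R := by
      simp only [Prod.norm_def, Real.norm_eq_abs, abs_of_nonneg hl, abs_of_nonneg hg,
        abs_of_nonneg hzs, abs_of_nonneg hzb, sup_le_iff]
      refine ⟨?_, ?_, ?_, ?_⟩ <;> linarith
    have h1 : (p + τs) * g ≤ |p + τs| * G :=
      (mul_le_mul_of_nonneg_right (le_abs_self _) hg).trans
        (mul_le_mul_of_nonneg_left hgG (abs_nonneg _))
    have h2 : D * l - k * l ^ 2 / 2 ≤ D ^ 2 / (2 * k) := by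
      rw [le_div_iff₀ (by positivity)]
      nlinarith [sq_nonneg (D - k * l)]
    have h3 := mul_le_mul_of_nonneg_left hn hδpos.le
    have hz : zs = zb + g + R - l := by linarith
    simp only [fpro]
    rw [← hk, hint]
    have h4 : (p + τs) * zs - (p + τb) * zb + (P0 * l - k * l ^ 2 / 2)
        = (D * l - k * l ^ 2 / 2) + (p + τs) * g + (p + τs) * R - δ * (zb + l) := by
      rw [hz, hD, hδ]; ring
    rw [h4, hA]
    linarith
  refine tendsto_atBot_mono key ?_
  exact tendsto_atBot_add_const_left _ _ (hnorm.const_mul_atTop_of_neg (neg_lt_zero.2 hδpos))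
end

section
/- (Netting transformation under net metering.) Suppose τs = τb and (l*, g*, zs*, zb*) is an optimal solution of the prosumer's problem. Define z̃s = max(zs* − zb*, 0) and z̃b = max(zb* − zs*, 0). Then (l*, g*, z̃s, z̃b) ∈ Xpro, it is also an optimal solution of the prosumer's problem, and z̃s·z̃b = 0. -/
/-- (Netting transformation under net metering.) If `τs = τb` and `(l*, g*, zs*, zb*)` is
optimal, then `(l*, g*, max (zs*-zb*) 0, max (zb*-zs*) 0)` is feasible, also optimal, and
the product of the two netted quantities is zero. -/
theorem prosumer_netting_transformation
    (P0 Q0 α R G p τs τb φ : ℝ)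
    (hP0 : 0 < P0) (hQ0 : 0 < Q0) (hα0 : 0 < α) (hα1 : α < 1)
    (hR : 0 < R) (hG : 0 ≤ G) (hp : 0 ≤ p)
    (C : ℝ → ℝ) (hC : ContDiff ℝ 1 C) (hCconv : ConvexOn ℝ Set.univ C)
    (hτ : τs = τb)
    (x : ℝ × ℝ × ℝ × ℝ) (hx : x ∈ Xpro R G)
    (hopt : ∀ y ∈ Xpro R G, fpro P0 Q0 α p τs τb φ C y ≤ fpro P0 Q0 α p τs τb φ C x) :
    (x.1, x.2.1, max (x.2.2.1 - x.2.2.2) 0, max (x.2.2.2 - x.2.2.1) 0) ∈ Xpro R G ∧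
    (∀ y ∈ Xpro R G, fpro P0 Q0 α p τs τb φ C y ≤
      fpro P0 Q0 α p τs τb φ C
        (x.1, x.2.1, max (x.2.2.1 - x.2.2.2) 0, max (x.2.2.2 - x.2.2.1) 0)) ∧
    max (x.2.2.1 - x.2.2.2) 0 * max (x.2.2.2 - x.2.2.1) 0 = 0 := by
  subst hτ
  obtain ⟨h1, h2, h3, h4, h5, h6⟩ := hx
  have key : max (x.2.2.1 - x.2.2.2) 0 - max (x.2.2.2 - x.2.2.1) 0 = x.2.2.1 - x.2.2.2 := by
    rcases le_total x.2.2.1 x.2.2.2 with h | h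
    · rw [max_eq_right (by linarith), max_eq_left (by linarith)]; ring
    · rw [max_eq_left (by linarith), max_eq_right (by linarith)]; ring
  refine ⟨⟨h1, h2, le_max_right _ _, le_max_right _ _, ?_, h6⟩, ?_, ?_⟩
  · dsimp only
    linarith
  · intro y hy
    refine (hopt y hy).trans (le_of_eq ?_)
    unfold fpro
    dsimp only
    linear_combination (-(p + τs)) * key
  · rcases le_total x.2.2.1 x.2.2.2 with h | h
    · rw [max_eq_right (by linarith), zero_mul]
    · rw [max_eq_right (a := x.2.2.2 - x.2.2.1) (by linarith), mul_zero]
end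

section
/- (Lemma 2: existence and partial uniqueness for the lower-level planner problem.) For any (τb, τs) with τb ≥ 0 and τs ≤ τb, the problem of maximizing Π(·; τb, τs) over X has an optimal solution. Moreover, any two optimal solutions have the same vectors d, l, g (backup generation), the same plant outputs g_{ih}, and the same net-sale quantities zs_i − zb_i for every node i. -/
/-- A lower-level decision vector `x = (d, l, zs, zb, g, (g_{ih}), y)`. -/
structure LVec (N : ℕ) (H : Fin N → Type) where
  d : Fin N → ℝ
  l : Fin N → ℝ
  zs : Fin N → ℝ
  zb : Fin N → ℝ
  g : Fin N → ℝ
  gih : (i : Fin N) → H i → ℝ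
  y : Fin N → ℝ

/-- The lower-level feasible set `X`. -/
def FeasX {N K : ℕ} {H : Fin N → Type} [∀ i, Fintype (H i)]
    (R Gp : Fin N → ℝ) (Gcap : (i : Fin N) → H i → ℝ)
    (T : Fin K → ℝ) (PTDF : Fin K → Fin N → ℝ) (x : LVec N H) : Prop :=
  (∀ i, 0 ≤ x.d i) ∧ (∀ i, 0 ≤ x.l i) ∧ (∀ i, 0 ≤ x.zs i) ∧ (∀ i, 0 ≤ x.zb i) ∧
  (∀ i, 0 ≤ x.g i) ∧ (∀ i (h : H i), 0 ≤ x.gih i h) ∧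
  (∀ i, x.l i + x.zs i - x.zb i - x.g i - R i = 0) ∧
  (∀ i, x.g i ≤ Gp i) ∧
  (∀ i (h : H i), x.gih i h ≤ Gcap i h) ∧
  (∑ i, x.y i = 0) ∧
  (∀ k, -T k ≤ ∑ i, PTDF k i * x.y i ∧ ∑ i, PTDF k i * x.y i ≤ T k) ∧
  (∀ i, x.y i - (∑ h, x.gih i h) - (x.zs i - x.zb i) + x.d i = 0)

/-- The social surplus `Π(x; τb, τs)`. -/
noncomputable def surplus {N : ℕ} {H : Fin N → Type} [∀ i, Fintype (H i)]
    (P0 Q0 α : Fin N → ℝ) (Cg : Fin N → ℝ → ℝ) (a A : (i : Fin N) → H i → ℝ)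
    (τb τs : ℝ) (x : LVec N H) : ℝ :=
  (∑ i, ((∫ m in (0:ℝ)..x.d i, (P0 i - (P0 i / ((1 - α i) * Q0 i)) * m)) - τb * x.d i))
  + (∑ i, (τs * x.zs i - τb * x.zb i
      + (∫ m in (0:ℝ)..x.l i, (P0 i - (P0 i / (α i * Q0 i)) * m)) - Cg i (x.g i)))
  - ∑ i, ∑ h, (a i h * x.gih i h + (1 / 2) * A i h * (x.gih i h) ^ 2)

/-- The optimal value function `V(τb, τs)` (as a real-valued supremum). -/
noncomputable def Vval {N K : ℕ} {H : Fin N → Type} [∀ i, Fintype (H i)]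
    (P0 Q0 α : Fin N → ℝ) (Cg : Fin N → ℝ → ℝ) (a A Gcap : (i : Fin N) → H i → ℝ)
    (R Gp : Fin N → ℝ) (T : Fin K → ℝ) (PTDF : Fin K → Fin N → ℝ)
    (τ : ℝ × ℝ) : ℝ :=
  sSup ((fun x => surplus P0 Q0 α Cg a A τ.1 τ.2 x) ''
    {x : LVec N H | FeasX R Gp Gcap T PTDF x})

/-- The rate set `𝒯`. -/
def Tset (τhat τlow : ℝ) : Set (ℝ × ℝ) :=
  {τ | 0 ≤ τ.1 ∧ τ.1 ≤ τhat ∧ τlow ≤ τ.2 ∧ τ.2 ≤ τ.1}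

/-- Closed form of the linear inverse-demand integral. -/
lemma aux_integral (p k q : ℝ) : (∫ m in (0:ℝ)..q, (p - k * m)) = p * q - k / 2 * q ^ 2 := by
  rw [intervalIntegral.integral_sub (by simp) (by
    apply Continuous.intervalIntegrable; fun_prop)]
  rw [intervalIntegral.integral_const_mul]
  simp
  ring

lemma aux_surplus_eq {N : ℕ} {H : Fin N → Type} [∀ i, Fintype (H i)]
    (P0 Q0 α : Fin N → ℝ) (Cg : Fin N → ℝ → ℝ) (a A : (i : Fin N) → H i → ℝ)
    (τb τs : ℝ) (x : LVec N H) :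
    surplus P0 Q0 α Cg a A τb τs x = ∑ i,
      (P0 i * x.d i - (P0 i / ((1 - α i) * Q0 i)) / 2 * x.d i ^ 2 - τb * x.d i
      + (τs * x.zs i - τb * x.zb i
        + (P0 i * x.l i - (P0 i / (α i * Q0 i)) / 2 * x.l i ^ 2) - Cg i (x.g i))
      - ∑ h, (a i h * x.gih i h + (1 / 2) * A i h * (x.gih i h) ^ 2)) := by
  unfold surplus
  simp only [aux_integral]
  rw [← Finset.sum_add_distrib, ← Finset.sum_sub_distrib]

/-- Packing a tuple into a decision vector. -/
def auxToL {N : ℕ} {H : Fin N → Type}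
    (p : (Fin N → ℝ) × (Fin N → ℝ) × (Fin N → ℝ) × (Fin N → ℝ) × (Fin N → ℝ) ×
      ((i : Fin N) → H i → ℝ) × (Fin N → ℝ)) : LVec N H :=
  ⟨p.1, p.2.1, p.2.2.1, p.2.2.2.1, p.2.2.2.2.1, p.2.2.2.2.2.1, p.2.2.2.2.2.2⟩

lemma aux_isClosed {N K : ℕ} {H : Fin N → Type} [∀ i, Fintype (H i)]
    (R Gp : Fin N → ℝ) (Gcap : (i : Fin N) → H i → ℝ)
    (T : Fin K → ℝ) (PTDF : Fin K → Fin N → ℝ) :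
    IsClosed {p | FeasX R Gp Gcap T PTDF (auxToL (H := H) p)} := by
  simp only [FeasX, auxToL, Set.ofPred_and, Set.ofPred_forall]
  repeat' first
    | apply IsClosed.inter
    | (apply isClosed_iInter; intro _)
    | (apply isClosed_le <;> fun_prop)
    | (apply isClosed_eq <;> fun_prop)

lemma aux_continuous {N : ℕ} {H : Fin N → Type} [∀ i, Fintype (H i)]
    (P0 Q0 α : Fin N → ℝ) (Cg : Fin N → ℝ → ℝ) (a A : (i : Fin N) → H i → ℝ)
    (hCg : ∀ i, Continuous (Cg i)) (τb τs : ℝ) :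
    Continuous (fun p => surplus P0 Q0 α Cg a A τb τs (auxToL (H := H) p)) := by
  simp only [aux_surplus_eq, auxToL]
  fun_prop

/-- Removing simultaneous buying and selling does not hurt. -/
lemma aux_reduce {N K : ℕ} {H : Fin N → Type} [∀ i, Fintype (H i)]
    (P0 Q0 α R Gp : Fin N → ℝ) (Cg : Fin N → ℝ → ℝ) (a A Gcap : (i : Fin N) → H i → ℝ)
    (T : Fin K → ℝ) (PTDF : Fin K → Fin N → ℝ)
    (τb τs : ℝ) (hτ : τs ≤ τb) (x : LVec N H) (hx : FeasX R Gp Gcap T PTDF x) :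
    ∃ x' : LVec N H, FeasX R Gp Gcap T PTDF x' ∧
      surplus P0 Q0 α Cg a A τb τs x ≤ surplus P0 Q0 α Cg a A τb τs x' ∧
      ∀ i, x'.zs i = max (x'.zs i - x'.zb i) 0 ∧ x'.zb i = max (x'.zb i - x'.zs i) 0 := by
  obtain ⟨h1, h2, h3, h4, h5, h6, h7, h8, h9, h10, h11, h12⟩ := hx
  refine ⟨⟨x.d, x.l, fun i => x.zs i - min (x.zs i) (x.zb i),
    fun i => x.zb i - min (x.zs i) (x.zb i), x.g, x.gih, x.y⟩,
    ⟨h1, h2, ?_, ?_, h5, h6, ?_, h8, h9, h10, h11, ?_⟩, ?_, ?_⟩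
  · intro i; simp
  · intro i; simp
  · intro i; have := h7 i; simp only; linarith
  · intro i; have := h12 i; simp only; linarith
  · rw [aux_surplus_eq, aux_surplus_eq]
    apply Finset.sum_le_sum
    intro i _
    have hm : 0 ≤ min (x.zs i) (x.zb i) := le_min (h3 i) (h4 i)
    have := mul_nonneg (sub_nonneg.2 hτ) hm
    simp only
    linarith
  · intro i
    simp only
    rcases le_total (x.zs i) (x.zb i) with h | h
    · rw [min_eq_left h, max_eq_right, max_eq_left] <;> (try constructor) <;> linarith
    · rw [min_eq_right h, max_eq_left, max_eq_right] <;> (try constructor) <;> linarith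

set_option maxHeartbeats 2000000 in
lemma aux_exists {N K : ℕ} {H : Fin N → Type} [∀ i, Fintype (H i)]
    (P0 Q0 α R Gp : Fin N → ℝ) (Cg : Fin N → ℝ → ℝ) (a A Gcap : (i : Fin N) → H i → ℝ)
    (T : Fin K → ℝ) (PTDF : Fin K → Fin N → ℝ)
    (hR : ∀ i, 0 < R i) (hGp : ∀ i, 0 ≤ Gp i) (hCg : ∀ i, Continuous (Cg i))
    (hGcap : ∀ i (h : H i), 0 ≤ Gcap i h) (hT : ∀ k, 0 < T k)
    (τb τs : ℝ) (hτ : τs ≤ τb) :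
    ∃ x : LVec N H, FeasX R Gp Gcap T PTDF x ∧
      ∀ x' : LVec N H, FeasX R Gp Gcap T PTDF x' →
        surplus P0 Q0 α Cg a A τb τs x' ≤ surplus P0 Q0 α Cg a A τb τs x := by
  set B : ℝ := ∑ i, ((∑ h, Gcap i h) + Gp i + R i) with hB
  have hterm : ∀ i, (∑ h, Gcap i h) + Gp i + R i ≤ B := by
    intro i
    refine Finset.single_le_sum (f := fun i => (∑ h, Gcap i h) + Gp i + R i) ?_ (Finset.mem_univ i)
    intro j _
    have := Finset.sum_nonneg (fun h (_ : h ∈ Finset.univ) => hGcap j h)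
    have := hGp j
    have := hR j
    linarith
  let lo : (Fin N → ℝ) × (Fin N → ℝ) × (Fin N → ℝ) × (Fin N → ℝ) × (Fin N → ℝ) ×
      ((i : Fin N) → H i → ℝ) × (Fin N → ℝ) :=
    (fun _ => 0, fun _ => 0, fun _ => 0, fun _ => 0, fun _ => 0, fun _ _ => 0, fun _ => -(3 * B))
  let hi : (Fin N → ℝ) × (Fin N → ℝ) × (Fin N → ℝ) × (Fin N → ℝ) × (Fin N → ℝ) ×
      ((i : Fin N) → H i → ℝ) × (Fin N → ℝ) :=
    (fun _ => B, fun _ => B, fun _ => B, fun _ => B, fun _ => B, Gcap, fun _ => 3 * B)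
  have hcomp : IsCompact (Set.Icc lo hi ∩ {p | FeasX R Gp Gcap T PTDF (auxToL (H := H) p)}) :=
    isCompact_Icc.inter_right (aux_isClosed R Gp Gcap T PTDF)
  have hmem : ∀ x : LVec N H, FeasX R Gp Gcap T PTDF x →
      (∀ i, x.zs i = max (x.zs i - x.zb i) 0 ∧ x.zb i = max (x.zb i - x.zs i) 0) →
      (x.d, x.l, x.zs, x.zb, x.g, x.gih, x.y) ∈
        Set.Icc lo hi ∩ {p | FeasX R Gp Gcap T PTDF (auxToL (H := H) p)} := by
    intro x hx hz
    refine ⟨?_, hx⟩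
    obtain ⟨h1, h2, h3, h4, h5, h6, h7, h8, h9, h10, h11, h12⟩ := hx
    have hs : ∀ i, ∑ h, x.gih i h ≤ ∑ h, Gcap i h := fun i =>
      Finset.sum_le_sum (fun h _ => h9 i h)
    have hs0 : ∀ i, 0 ≤ ∑ h, x.gih i h := fun i =>
      Finset.sum_nonneg (fun h _ => h6 i h)
    have htot : ∑ i, (x.d i + x.l i) ≤ B := by
      have e : ∑ i, (x.d i + x.l i) = ∑ i, ((∑ h, x.gih i h) + x.g i + R i) - ∑ i, x.y i := by
        rw [← Finset.sum_sub_distrib]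
        refine Finset.sum_congr rfl (fun i _ => ?_)
        have := h7 i
        have := h12 i
        linarith
      rw [e, h10, sub_zero]
      refine Finset.sum_le_sum (fun i _ => ?_)
      have := hs i
      have := h8 i
      linarith
    have hdl : ∀ i, x.d i + x.l i ≤ B := fun i =>
      (Finset.single_le_sum (f := fun i => x.d i + x.l i)
        (fun j _ => add_nonneg (h1 j) (h2 j)) (Finset.mem_univ i)).trans htot
    have hall : ∀ i, x.d i ≤ B ∧ x.l i ≤ B ∧ x.zs i ≤ B ∧ x.zb i ≤ B ∧ x.g i ≤ B ∧
        -(3 * B) ≤ x.y i ∧ x.y i ≤ 3 * B := by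
      intro i
      have a1 := h1 i
      have a2 := h2 i
      have a3 := h3 i
      have a4 := h4 i
      have a5 := h5 i
      have a7 := h7 i
      have a8 := h8 i
      have a12 := h12 i
      have b1 := hs i
      have b2 := hs0 i
      have b3 := hdl i
      have b4 := hterm i
      have b5 := hR i
      have c1 : x.zs i ≤ B := by
        rw [(hz i).1]
        exact max_le (by linarith) (by linarith)
      have c2 : x.zb i ≤ B := by
        rw [(hz i).2]
        exact max_le (by linarith) (by linarith)
      refine ⟨?_, ?_, c1, c2, ?_, ?_, ?_⟩ <;> linarith
    exact ⟨⟨h1, h2, h3, h4, h5, h6, fun i => (hall i).2.2.2.2.2.1⟩,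
      ⟨fun i => (hall i).1, fun i => (hall i).2.1, fun i => (hall i).2.2.1,
        fun i => (hall i).2.2.2.1, fun i => (hall i).2.2.2.2.1, h9,
        fun i => (hall i).2.2.2.2.2.2⟩⟩
  have hne : (Set.Icc lo hi ∩ {p | FeasX R Gp Gcap T PTDF (auxToL (H := H) p)}).Nonempty := by
    refine ⟨_, hmem ⟨fun _ => 0, R, fun _ => 0, fun _ => 0, fun _ => 0, fun _ _ => 0, fun _ => 0⟩
      ?_ ?_⟩
    · refine ⟨?_, fun i => (hR i).le, ?_, ?_, ?_, ?_, ?_, hGp, hGcap, ?_, ?_, ?_⟩ <;> simp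
      intro k
      exact (hT k).le
    · simp
  obtain ⟨p, hp, hmax⟩ := hcomp.exists_isMaxOn hne
    (aux_continuous (H := H) P0 Q0 α Cg a A hCg τb τs).continuousOn
  refine ⟨auxToL p, hp.2, fun x' hx' => ?_⟩
  obtain ⟨x'', h1, h2, h3⟩ := aux_reduce P0 Q0 α R Gp Cg a A Gcap T PTDF τb τs hτ x' hx'
  exact h2.trans (hmax (hmem x'' h1 h3))

lemma aux_convex_gap (f : ℝ → ℝ) (hf : StrictConvexOn ℝ Set.univ f) (u v : ℝ) :
    0 ≤ f u + f v - 2 * f ((u + v) / 2) ∧ (f u + f v - 2 * f ((u + v) / 2) = 0 → u = v) := by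
  by_cases h : u = v
  · subst h
    refine ⟨?_, fun _ => rfl⟩
    rw [show (u + u) / 2 = u by ring]
    linarith
  · have := hf.2 (Set.mem_univ u) (Set.mem_univ v) h (show (0:ℝ) < 1 / 2 by norm_num)
      (show (0:ℝ) < 1 / 2 by norm_num) (by norm_num)
    simp only [smul_eq_mul] at this
    rw [show 1 / 2 * u + 1 / 2 * v = (u + v) / 2 by ring] at this
    exact ⟨by linarith, fun h0 => by linarith⟩

lemma aux_unique {N K : ℕ} {H : Fin N → Type} [∀ i, Fintype (H i)]
    (P0 Q0 α R Gp : Fin N → ℝ) (Cg : Fin N → ℝ → ℝ) (a A Gcap : (i : Fin N) → H i → ℝ)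
    (T : Fin K → ℝ) (PTDF : Fin K → Fin N → ℝ)
    (hP0 : ∀ i, 0 < P0 i) (hQ0 : ∀ i, 0 < Q0 i)
    (hα0 : ∀ i, 0 < α i) (hα1 : ∀ i, α i < 1)
    (hCgconv : ∀ i, StrictConvexOn ℝ Set.univ (Cg i))
    (hA : ∀ i (h : H i), 0 < A i h)
    (τb τs : ℝ) (x x' : LVec N H)
    (hx : FeasX R Gp Gcap T PTDF x) (hx' : FeasX R Gp Gcap T PTDF x')
    (ho : ∀ z : LVec N H, FeasX R Gp Gcap T PTDF z →
        surplus P0 Q0 α Cg a A τb τs z ≤ surplus P0 Q0 α Cg a A τb τs x)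
    (ho' : ∀ z : LVec N H, FeasX R Gp Gcap T PTDF z →
        surplus P0 Q0 α Cg a A τb τs z ≤ surplus P0 Q0 α Cg a A τb τs x') :
    x.d = x'.d ∧ x.l = x'.l ∧ x.g = x'.g ∧ x.gih = x'.gih ∧
        ∀ i, x.zs i - x.zb i = x'.zs i - x'.zb i := by
  let z : LVec N H := ⟨fun i => (x.d i + x'.d i) / 2, fun i => (x.l i + x'.l i) / 2,
    fun i => (x.zs i + x'.zs i) / 2, fun i => (x.zb i + x'.zb i) / 2,
    fun i => (x.g i + x'.g i) / 2, fun i h => (x.gih i h + x'.gih i h) / 2,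
    fun i => (x.y i + x'.y i) / 2⟩
  have h7 := hx.2.2.2.2.2.2.1
  have h7' := hx'.2.2.2.2.2.2.1
  have hzf : FeasX R Gp Gcap T PTDF z := by
    obtain ⟨h1, h2, h3, h4, h5, h6, h7, h8, h9, h10, h11, h12⟩ := hx
    obtain ⟨k1, k2, k3, k4, k5, k6, k7, k8, k9, k10, k11, k12⟩ := hx'
    refine ⟨fun i => ?_, fun i => ?_, fun i => ?_, fun i => ?_, fun i => ?_, fun i h => ?_,
      fun i => ?_, fun i => ?_, fun i h => ?_, ?_, fun k => ?_, fun i => ?_⟩ <;> simp only [z]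
    · linarith [h1 i, k1 i]
    · linarith [h2 i, k2 i]
    · linarith [h3 i, k3 i]
    · linarith [h4 i, k4 i]
    · linarith [h5 i, k5 i]
    · linarith [h6 i h, k6 i h]
    · linarith [h7 i, k7 i]
    · linarith [h8 i, k8 i]
    · linarith [h9 i h, k9 i h]
    · rw [← Finset.sum_div, Finset.sum_add_distrib, h10, k10]; simp
    · have e : ∑ i, PTDF k i * ((x.y i + x'.y i) / 2) =
          (∑ i, PTDF k i * x.y i + ∑ i, PTDF k i * x'.y i) / 2 := by
        rw [← Finset.sum_add_distrib, Finset.sum_div]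
        exact Finset.sum_congr rfl (fun i _ => by ring)
      rw [e]
      have := h11 k
      have := k11 k
      constructor <;> linarith
    · rw [← Finset.sum_div, Finset.sum_add_distrib]
      linarith [h12 i, k12 i]
  let kd : Fin N → ℝ := fun i => P0 i / ((1 - α i) * Q0 i)
  let kl : Fin N → ℝ := fun i => P0 i / (α i * Q0 i)
  have hkd : ∀ i, 0 < kd i := fun i =>
    div_pos (hP0 i) (mul_pos (sub_pos.2 (hα1 i)) (hQ0 i))
  have hkl : ∀ i, 0 < kl i := fun i => div_pos (hP0 i) (mul_pos (hα0 i) (hQ0 i))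
  let D : Fin N → ℝ := fun i => kd i / 4 * (x.d i - x'.d i) ^ 2 + kl i / 4 * (x.l i - x'.l i) ^ 2
    + (Cg i (x.g i) + Cg i (x'.g i) - 2 * Cg i ((x.g i + x'.g i) / 2))
    + ∑ h, A i h / 4 * (x.gih i h - x'.gih i h) ^ 2
  have hsum : 2 * surplus P0 Q0 α Cg a A τb τs z - surplus P0 Q0 α Cg a A τb τs x
      - surplus P0 Q0 α Cg a A τb τs x' = ∑ i, D i := by
    rw [aux_surplus_eq, aux_surplus_eq, aux_surplus_eq, Finset.mul_sum,
      ← Finset.sum_sub_distrib, ← Finset.sum_sub_distrib]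
    refine Finset.sum_congr rfl (fun i _ => ?_)
    have e : ∑ h, A i h / 4 * (x.gih i h - x'.gih i h) ^ 2 =
        ∑ h, (a i h * x.gih i h + (1 / 2) * A i h * (x.gih i h) ^ 2)
        + ∑ h, (a i h * x'.gih i h + (1 / 2) * A i h * (x'.gih i h) ^ 2)
        - 2 * ∑ h, (a i h * ((x.gih i h + x'.gih i h) / 2)
          + (1 / 2) * A i h * ((x.gih i h + x'.gih i h) / 2) ^ 2) := by
      rw [Finset.mul_sum, ← Finset.sum_add_distrib, ← Finset.sum_sub_distrib]
      exact Finset.sum_congr rfl (fun h _ => by ring)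
    simp only [D, z, kd, kl]
    rw [e]
    ring
  have t1 : ∀ i, 0 ≤ kd i / 4 * (x.d i - x'.d i) ^ 2 := fun i => by
    have := hkd i
    positivity
  have t2 : ∀ i, 0 ≤ kl i / 4 * (x.l i - x'.l i) ^ 2 := fun i => by
    have := hkl i
    positivity
  have t3 := fun i => aux_convex_gap (Cg i) (hCgconv i) (x.g i) (x'.g i)
  have t4' : ∀ i, ∀ h ∈ Finset.univ, 0 ≤ A i h / 4 * (x.gih i h - x'.gih i h) ^ 2 := fun i h _ => by
    have := hA i h
    positivity
  have t4 : ∀ i, 0 ≤ ∑ h, A i h / 4 * (x.gih i h - x'.gih i h) ^ 2 := fun i =>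
    Finset.sum_nonneg (t4' i)
  have hD0 : ∀ i ∈ Finset.univ, 0 ≤ D i := fun i _ => by
    simp only [D]
    linarith [t1 i, t2 i, (t3 i).1, t4 i]
  have hDs : ∑ i, D i = 0 := by
    apply le_antisymm _ (Finset.sum_nonneg hD0)
    rw [← hsum]
    linarith [ho z hzf, ho' z hzf]
  have hDi : ∀ i, D i = 0 := fun i =>
    (Finset.sum_eq_zero_iff_of_nonneg hD0).1 hDs i (Finset.mem_univ i)
  have hsq : ∀ c u v : ℝ, 0 < c → c / 4 * (u - v) ^ 2 = 0 → u = v := by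
    intro c u v hc h
    have h2 : (u - v) ^ 2 = 0 := (mul_eq_zero.1 h).resolve_left (by positivity)
    exact sub_eq_zero.1 (pow_eq_zero_iff (two_ne_zero) |>.1 h2)
  have ed : ∀ i, x.d i = x'.d i := fun i => by
    refine hsq _ _ _ (hkd i) ?_
    have := hDi i
    simp only [D] at this
    linarith [t1 i, t2 i, (t3 i).1, t4 i]
  have el : ∀ i, x.l i = x'.l i := fun i => by
    refine hsq _ _ _ (hkl i) ?_
    have := hDi i
    simp only [D] at this
    linarith [t1 i, t2 i, (t3 i).1, t4 i]
  have eg : ∀ i, x.g i = x'.g i := fun i => by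
    refine (t3 i).2 ?_
    have := hDi i
    simp only [D] at this
    linarith [t1 i, t2 i, (t3 i).1, t4 i]
  have eh : ∀ i h, x.gih i h = x'.gih i h := fun i h => by
    have h0 : ∑ h, A i h / 4 * (x.gih i h - x'.gih i h) ^ 2 = 0 := by
      have := hDi i
      simp only [D] at this
      linarith [t1 i, t2 i, (t3 i).1, t4 i]
    exact hsq _ _ _ (hA i h)
      ((Finset.sum_eq_zero_iff_of_nonneg (t4' i)).1 h0 h (Finset.mem_univ h))
  refine ⟨funext ed, funext el, funext eg, funext fun i => funext (eh i), fun i => ?_⟩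
  linarith [h7 i, h7' i, el i, eg i]

/-- (Lemma 2: existence and partial uniqueness for the lower-level planner problem.) -/
theorem lower_level_exists_and_partial_uniqueness
    (N K : ℕ) (hN : 1 ≤ N)
    (H : Fin N → Type) [∀ i, Fintype (H i)]
    (P0 Q0 α R Gp : Fin N → ℝ) (Cg : Fin N → ℝ → ℝ)
    (a A Gcap : (i : Fin N) → H i → ℝ)
    (T : Fin K → ℝ) (PTDF : Fin K → Fin N → ℝ)
    (hP0 : ∀ i, 0 < P0 i) (hQ0 : ∀ i, 0 < Q0 i)
    (hα0 : ∀ i, 0 < α i) (hα1 : ∀ i, α i < 1)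
    (hR : ∀ i, 0 < R i) (hGp : ∀ i, 0 ≤ Gp i)
    (hCg : ∀ i, ContDiff ℝ 1 (Cg i)) (hCgconv : ∀ i, StrictConvexOn ℝ Set.univ (Cg i))
    (hGcap : ∀ i (h : H i), 0 ≤ Gcap i h)
    (ha : ∀ i (h : H i), 0 < a i h) (hA : ∀ i (h : H i), 0 < A i h)
    (hT : ∀ k, 0 < T k)
    (τb τs : ℝ) (hτb : 0 ≤ τb) (hτ : τs ≤ τb) :
    (∃ x : LVec N H, FeasX R Gp Gcap T PTDF x ∧
      ∀ x' : LVec N H, FeasX R Gp Gcap T PTDF x' →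
        surplus P0 Q0 α Cg a A τb τs x' ≤ surplus P0 Q0 α Cg a A τb τs x) ∧
    (∀ x x' : LVec N H,
      FeasX R Gp Gcap T PTDF x → FeasX R Gp Gcap T PTDF x' →
      (∀ z : LVec N H, FeasX R Gp Gcap T PTDF z →
        surplus P0 Q0 α Cg a A τb τs z ≤ surplus P0 Q0 α Cg a A τb τs x) →
      (∀ z : LVec N H, FeasX R Gp Gcap T PTDF z →
        surplus P0 Q0 α Cg a A τb τs z ≤ surplus P0 Q0 α Cg a A τb τs x') →
      x.d = x'.d ∧ x.l = x'.l ∧ x.g = x'.g ∧ x.gih = x'.gih ∧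
        ∀ i, x.zs i - x.zb i = x'.zs i - x'.zb i) := by
  exact ⟨aux_exists P0 Q0 α R Gp Cg a A Gcap T PTDF hR hGp (fun i => (hCg i).continuous)
      hGcap hT τb τs hτ,
    fun x x' hx hx' ho ho' => aux_unique P0 Q0 α R Gp Cg a A Gcap T PTDF hP0 hQ0 hα0 hα1
      hCgconv hA τb τs x x' hx hx' ho ho'⟩
end

section
/- (Planner optimality is equivalent to the market-equilibrium complementarity system.) Fix rates (τb, τs) with τb ≥ 0 and τs ≤ τb. A point x = (d, l, zs, zb, g, (g_{ih}), y) ∈ X maximizes Π(·; τb, τs) over X if and only if there exist multipliers δ ∈ ℝ^N, κ ∈ ℝ^N with κ ≥ 0, ρ_{ih} ≥ 0, θ ∈ ℝ, λ⁺, λ⁻ ∈ ℝ^K with λ⁺, λ⁻ ≥ 0, and p ∈ ℝ^N such that for all i, h ∈ H_i, and k: 0 ≤ d_i ⊥ P0_i − (P0_i/((1−α_i)·Q0_i))·d_i − (p_i + τb) ≤ 0; 0 ≤ l_i ⊥ P0_i − (P0_i/(α_i·Q0_i))·l_i − δ_i ≤ 0; 0 ≤ g_i ⊥ −Cg_i′(g_i)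 + δ_i − κ_i ≤ 0; 0 ≤ κ_i ⊥ g_i − Gp_i ≤ 0; 0 ≤ zs_i ⊥ (p_i + τs) − δ_i ≤ 0; 0 ≤ zb_i ⊥ −(p_i + τb) + δ_i ≤ 0; 0 ≤ g_{ih} ⊥ −(a_{ih} + A_{ih}·g_{ih}) − ρ_{ih} + p_i ≤ 0; 0 ≤ ρ_{ih} ⊥ g_{ih} − G_{ih} ≤ 0; −θ + Σ_k PTDF_{ki}·(λ⁻_k − λ⁺_k) − p_i = 0; 0 ≤ λ⁺_k ⊥ Σ_i PTDF_{ki}·y_i − T_k ≤ 0; and 0 ≤ λ⁻_k ⊥ −Σ_i PTDF_{ki}·y_i − T_k ≤ 0. Here, for reals a, b, '0 ≤ a ⊥ b ≤ 0' means a ≥ 0, b ≤ 0, and a·b = 0. -/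
/-- `0 ≤ a ⊥ b ≤ 0` : complementarity of `a ≥ 0` and `b ≤ 0`. -/
def perp (a b : ℝ) : Prop := 0 ≤ a ∧ b ≤ 0 ∧ a * b = 0

theorem farkas_aux {V ι : Type} [AddCommGroup V] [Module ℝ V] [DecidableEq ι]
    (s : Finset ι) : ∀ (A : ι → V →ₗ[ℝ] ℝ) (f : V →ₗ[ℝ] ℝ),
    (∀ v, (∀ j ∈ s, A j v ≤ 0) → f v ≤ 0) →
    ∃ μ : ι → ℝ, (∀ j, 0 ≤ μ j) ∧ (∀ j, j ∉ s → μ j = 0) ∧ ∀ v, f v = ∑ j ∈ s, μ j * A j v := by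
  induction s using Finset.induction_on with
  | empty =>
    intro A f h
    refine ⟨fun _ => 0, fun _ => le_rfl, fun _ _ => rfl, fun v => ?_⟩
    have h1 := h v (by simp)
    have h2 := h (-v) (by simp)
    simp at h2 ⊢
    linarith
  | insert m s hm ih =>
    intro A f h
    by_cases hc : ∀ v, (∀ j ∈ s, A j v ≤ 0) → f v ≤ 0
    · obtain ⟨μ, h0, hz, hs⟩ := ih A f hc
      refine ⟨μ, h0, fun j hj => hz j (fun h' => hj (Finset.mem_insert_of_mem h')), fun v => ?_⟩
      rw [Finset.sum_insert hm, hz m hm, hs v]; ring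
    · push Not at hc
      obtain ⟨v0, hv0, hf0⟩ := hc
      have hA0 : 0 < A m v0 := by
        by_contra hcon
        have := h v0 (by
          intro j hj
          rcases Finset.mem_insert.1 hj with rfl | hj
          · exact not_lt.1 hcon
          · exact hv0 j hj)
        linarith
      set c := (A m v0)⁻¹ with hcdef
      have hcpos : 0 < c := inv_pos.2 hA0
      have hcA : c * A m v0 = 1 := inv_mul_cancel₀ hA0.ne'
      obtain ⟨μ, h0, hz, hs⟩ := ih (fun j => A j - (c * A j v0) • A m) (f - (c * f v0) • A m) (by
        intro v hv
        have := h (v - (c * A m v) • v0) (by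
          intro j hj
          rcases Finset.mem_insert.1 hj with rfl | hj
          · simp only [map_sub, map_smul, smul_eq_mul]
            have : c * A j v * A j v0 = A j v := by
              calc c * A j v * A j v0 = (c * A j v0) * A j v := by ring
                _ = _ := by rw [hcA, one_mul]
            linarith
          · have := hv j hj
            simp at this ⊢
            linarith)
        simp at this ⊢
        linarith)
      have hsum : ∑ j ∈ s, μ j * A j v0 ≤ 0 :=
        Finset.sum_nonpos fun j hj => mul_nonpos_of_nonneg_of_nonpos (h0 j) (hv0 j hj)
      refine ⟨fun j => if j = m then c * (f v0 - ∑ j ∈ s, μ j * A j v0) else μ j, ?_, ?_, ?_⟩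
      · intro j
        by_cases hj : j = m
        · simp only [hj, if_true]
          exact mul_nonneg hcpos.le (by linarith)
        · simpa [hj] using h0 j
      · intro j hj
        have : j ≠ m := fun h' => hj (by simp [h'])
        simp only [this, if_false]
        exact hz j (fun h' => hj (Finset.mem_insert_of_mem h'))
      · intro v
        rw [Finset.sum_insert hm]
        have e : ∑ j ∈ s, (if j = m then c * (f v0 - ∑ j ∈ s, μ j * A j v0) else μ j) * A j v
            = ∑ j ∈ s, μ j * A j v := by
          refine Finset.sum_congr rfl fun j hj => ?_
          have : j ≠ m := fun h' => hm (h' ▸ hj)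
          simp [this]
        rw [e]
        have := hs v
        simp only [LinearMap.sub_apply, LinearMap.smul_apply, smul_eq_mul, mul_sub,
          Finset.sum_sub_distrib] at this
        have e2 : ∑ j ∈ s, μ j * (c * A j v0 * A m v) = c * A m v * ∑ j ∈ s, μ j * A j v0 := by
          rw [Finset.mul_sum]
          exact Finset.sum_congr rfl fun j _ => by ring
        rw [e2] at this
        simp only [if_true]
        linarith

theorem kkt_lin {V ι ε : Type} [AddCommGroup V] [Module ℝ V] [Fintype ι] [Fintype ε]
    (A : ι → V →ₗ[ℝ] ℝ) (b : ι → ℝ) (B : ε → V →ₗ[ℝ] ℝ) (c : ε → ℝ) (f : V →ₗ[ℝ] ℝ) (x : V)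
    (hA : ∀ j, A j x ≤ b j) (hB : ∀ e, B e x = c e)
    (hopt : ∀ x', (∀ j, A j x' ≤ b j) → (∀ e, B e x' = c e) → f x' ≤ f x) :
    ∃ (μ : ι → ℝ) (ν : ε → ℝ), (∀ j, 0 ≤ μ j) ∧ (∀ j, μ j * (A j x - b j) = 0) ∧
      ∀ v, f v = ∑ j, μ j * A j v + ∑ e, ν e * B e v := by
  classical
  let A' : ι ⊕ ε ⊕ ε → V →ₗ[ℝ] ℝ := Sum.elim A (Sum.elim B (fun e => - B e))
  let act : ι ⊕ ε ⊕ ε → Prop := Sum.elim (fun j => A j x = b j) (fun _ => True)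
  obtain ⟨μ, h0, hz, hs⟩ := farkas_aux (Finset.univ.filter act) A' f (by
    intro v hv
    have hvA : ∀ j, A j x = b j → A j v ≤ 0 := fun j hj =>
      hv (Sum.inl j) (by simp [act, hj])
    have hvB : ∀ e, B e v = 0 := by
      intro e
      have h1 := hv (Sum.inr (Sum.inl e)) (by simp [act])
      have h2 := hv (Sum.inr (Sum.inr e)) (by simp [act])
      simp [A'] at h1 h2
      linarith
    have hev : ∀ᶠ t in nhdsWithin (0:ℝ) (Set.Ioi 0), ∀ j, A j x + t * A j v ≤ b j := by
      rw [Filter.eventually_all]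
      intro j
      rcases (hA j).eq_or_lt with h | h
      · filter_upwards [self_mem_nhdsWithin] with t ht
        have := mul_nonpos_of_nonneg_of_nonpos (le_of_lt ht) (hvA j h)
        linarith
      · have hc : Continuous fun t : ℝ => A j x + t * A j v := by fun_prop
        have : ∀ᶠ t in nhds (0:ℝ), A j x + t * A j v < b j :=
          hc.continuousAt.eventually_lt continuousAt_const (by simpa using h)
        filter_upwards [nhdsWithin_le_nhds this] with t ht using ht.le
    obtain ⟨t, ht, ht0⟩ := (hev.and self_mem_nhdsWithin).exists
    have ht0 : 0 < t := ht0
    have := hopt (x + t • v) (by intro j; simpa using ht j) (by intro e; simp [hB, hvB])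
    simp at this
    by_contra hcon
    have := mul_pos ht0 (not_le.1 hcon)
    linarith)
  refine ⟨fun j => μ (Sum.inl j), fun e => μ (Sum.inr (Sum.inl e)) - μ (Sum.inr (Sum.inr e)),
    fun j => h0 _, fun j => ?_, fun v => ?_⟩
  · by_cases h : A j x = b j
    · simp [h]
    · have := hz (Sum.inl j) (by simp [act, h])
      simp [this]
  · rw [hs v, Finset.sum_subset (Finset.subset_univ _)
      (fun j _ hj => by rw [hz j hj, zero_mul])]
    simp only [Fintype.sum_sum_type, A', Sum.elim_inl, Sum.elim_inr, LinearMap.neg_apply, sub_mul,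
      Finset.sum_sub_distrib, mul_neg, Finset.sum_neg_distrib]
    ring

theorem deriv_nonpos_of_max {φ : ℝ → ℝ} {c : ℝ} (h : HasDerivAt φ c 0)
    (hm : ∀ t, 0 < t → t ≤ 1 → φ t ≤ φ 0) : c ≤ 0 := by
  have h1 := (hasDerivAt_iff_tendsto_slope.1 h).mono_left
    (nhdsWithin_mono (0:ℝ) (fun t (ht : t ∈ Set.Ioi (0:ℝ)) => (ne_of_gt ht : t ≠ 0)))
  refine le_of_tendsto h1 ?_
  filter_upwards [Ioc_mem_nhdsGT (zero_lt_one' ℝ)] with t ht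
  rw [slope_def_field]
  exact div_nonpos_of_nonpos_of_nonneg (by linarith [hm t ht.1 ht.2]) (by linarith [ht.1])

theorem integral_lin (P c d : ℝ) : (∫ m in (0:ℝ)..d, (P - c * m)) = P * d - c * d ^ 2 / 2 := by
  rw [intervalIntegral.integral_sub (by simp) (by apply Continuous.intervalIntegrable; fun_prop),
    intervalIntegral.integral_const_mul, integral_id]
  simp
  ring

theorem convex_tangent {f : ℝ → ℝ} (hf : ConvexOn ℝ Set.univ f) (hd : Differentiable ℝ f)
    (u v : ℝ) : f u + deriv f u * (v - u) ≤ f v := by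
  have hl : HasDerivAt (fun t : ℝ => u + t * (v - u)) (v - u) 0 := by
    simpa using ((hasDerivAt_id (0:ℝ)).mul_const (v - u)).const_add u
  have hc : HasDerivAt (fun t : ℝ => f (u + t * (v - u))) (deriv f u * (v - u)) 0 := by
    have := (hd (u + 0 * (v - u))).hasDerivAt.comp (0:ℝ) hl
    simpa [Function.comp_def] using this
  have h2 := hc.sub ((hasDerivAt_id (0:ℝ)).mul_const (f v - f u))
  have := deriv_nonpos_of_max h2 (by
    intro t h0 h1
    have := hf.2 (Set.mem_univ u) (Set.mem_univ v) (by linarith : 0 ≤ 1 - t) h0.le (by ring)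
    simp only [smul_eq_mul] at this
    have e : (1 - t) * u + t * v = u + t * (v - u) := by ring
    rw [e] at this
    simp
    linarith)
  linarith

/-- The linear functional used in the first order condition. -/
def linObj {N : ℕ} {H : Fin N → Type} [∀ i, Fintype (H i)]
    (cd cl cs cb cg : Fin N → ℝ) (ch : (i : Fin N) → H i → ℝ) (x : LVec N H) : ℝ :=
  (∑ i, cd i * x.d i) + (∑ i, cl i * x.l i) + (∑ i, cs i * x.zs i) + (∑ i, cb i * x.zb i)
    + (∑ i, cg i * x.g i) + ∑ i, ∑ h, ch i h * x.gih i h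

theorem lp_dual {N K : ℕ} {H : Fin N → Type} [∀ i, Fintype (H i)]
    (R Gp : Fin N → ℝ) (Gcap : (i : Fin N) → H i → ℝ)
    (T : Fin K → ℝ) (PTDF : Fin K → Fin N → ℝ)
    (cd cl cs cb cg : Fin N → ℝ) (ch : (i : Fin N) → H i → ℝ)
    (x : LVec N H) (hx : FeasX R Gp Gcap T PTDF x)
    (hopt : ∀ x' : LVec N H, FeasX R Gp Gcap T PTDF x' →
      linObj cd cl cs cb cg ch x' ≤ linObj cd cl cs cb cg ch x) :
    ∃ (δ κ : Fin N → ℝ) (ρ : (i : Fin N) → H i → ℝ) (θ : ℝ)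
      (lp lm : Fin K → ℝ) (p : Fin N → ℝ),
      (∀ i, 0 ≤ κ i) ∧ (∀ i (h : H i), 0 ≤ ρ i h) ∧
      (∀ k, 0 ≤ lp k) ∧ (∀ k, 0 ≤ lm k) ∧
      (∀ i, perp (x.d i) (cd i - p i)) ∧
      (∀ i, perp (x.l i) (cl i - δ i)) ∧
      (∀ i, perp (x.g i) (cg i + δ i - κ i)) ∧
      (∀ i, perp (κ i) (x.g i - Gp i)) ∧
      (∀ i, perp (x.zs i) (cs i + p i - δ i)) ∧
      (∀ i, perp (x.zb i) (cb i - p i + δ i)) ∧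
      (∀ i (h : H i), perp (x.gih i h) (ch i h - ρ i h + p i)) ∧
      (∀ i (h : H i), perp (ρ i h) (x.gih i h - Gcap i h)) ∧
      (∀ i, -θ + (∑ k, PTDF k i * (lm k - lp k)) - p i = 0) ∧
      (∀ k, perp (lp k) ((∑ i, PTDF k i * x.y i) - T k)) ∧
      (∀ k, perp (lm k) (-(∑ i, PTDF k i * x.y i) - T k)) := by
  classical
  let F := Fin N → ℝ
  let W := (i : Fin N) → H i → ℝ
  let V := F × F × F × F × F × W × F
  let qd : Fin N → V →ₗ[ℝ] ℝ := fun i => ⟨⟨fun v => v.1 i, by intros; rfl⟩, by intros; rfl⟩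
  let ql : Fin N → V →ₗ[ℝ] ℝ := fun i => ⟨⟨fun v => v.2.1 i, by intros; rfl⟩, by intros; rfl⟩
  let qs : Fin N → V →ₗ[ℝ] ℝ := fun i => ⟨⟨fun v => v.2.2.1 i, by intros; rfl⟩, by intros; rfl⟩
  let qb : Fin N → V →ₗ[ℝ] ℝ := fun i => ⟨⟨fun v => v.2.2.2.1 i, by intros; rfl⟩, by intros; rfl⟩
  let qg : Fin N → V →ₗ[ℝ] ℝ := fun i =>
    ⟨⟨fun v => v.2.2.2.2.1 i, by intros; rfl⟩, by intros; rfl⟩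
  let qh : (Σ i, H i) → V →ₗ[ℝ] ℝ := fun j =>
    ⟨⟨fun v => v.2.2.2.2.2.1 j.1 j.2, by intros; rfl⟩, by intros; rfl⟩
  let qy : Fin N → V →ₗ[ℝ] ℝ := fun i =>
    ⟨⟨fun v => v.2.2.2.2.2.2 i, by intros; rfl⟩, by intros; rfl⟩
  have eqd : ∀ i v, qd i v = v.1 i := fun _ _ => rfl
  have eql : ∀ i v, ql i v = v.2.1 i := fun _ _ => rfl
  have eqs : ∀ i v, qs i v = v.2.2.1 i := fun _ _ => rfl
  have eqb : ∀ i v, qb i v = v.2.2.2.1 i := fun _ _ => rfl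
  have eqg : ∀ i v, qg i v = v.2.2.2.2.1 i := fun _ _ => rfl
  have eqh : ∀ j v, qh j v = v.2.2.2.2.2.1 j.1 j.2 := fun _ _ => rfl
  have eqy : ∀ i v, qy i v = v.2.2.2.2.2.2 i := fun _ _ => rfl
  clear_value qd ql qs qb qg qh qy
  let qT : Fin K → V →ₗ[ℝ] ℝ := fun k => ∑ i, PTDF k i • qy i
  have eqT : ∀ k v, qT k v = ∑ i, PTDF k i * v.2.2.2.2.2.2 i := by
    intro k v; simp [qT, LinearMap.sum_apply, eqy]
  clear_value qT
  let ι := Fin N ⊕ Fin N ⊕ Fin N ⊕ Fin N ⊕ Fin N ⊕ (Σ i, H i) ⊕ Fin N ⊕ (Σ i, H i) ⊕ Fin K ⊕ Fin K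
  let A : ι → V →ₗ[ℝ] ℝ :=
    Sum.elim (fun i => - qd i) <| Sum.elim (fun i => - ql i) <| Sum.elim (fun i => - qs i) <|
    Sum.elim (fun i => - qb i) <| Sum.elim (fun i => - qg i) <| Sum.elim (fun j => - qh j) <|
    Sum.elim qg <| Sum.elim qh <| Sum.elim qT (fun k => - qT k)
  let b : ι → ℝ :=
    Sum.elim (fun i => 0) <| Sum.elim (fun i => 0) <| Sum.elim (fun i => 0) <|
    Sum.elim (fun i => 0) <| Sum.elim (fun i => 0) <| Sum.elim (fun j => 0) <|
    Sum.elim Gp <| Sum.elim (fun j => Gcap j.1 j.2) <| Sum.elim T T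
  let B : Fin N ⊕ Fin N ⊕ Unit → V →ₗ[ℝ] ℝ :=
    Sum.elim (fun i => ql i + qs i - qb i - qg i) <|
    Sum.elim (fun i => qy i - (∑ h, qh ⟨i, h⟩) - (qs i - qb i) + qd i) (fun _ => ∑ i, qy i)
  let c : Fin N ⊕ Fin N ⊕ Unit → ℝ := Sum.elim R <| Sum.elim (fun _ => 0) (fun _ => 0)
  let f : V →ₗ[ℝ] ℝ := (∑ i, cd i • qd i) + (∑ i, cl i • ql i) + (∑ i, cs i • qs i) +
    (∑ i, cb i • qb i) + (∑ i, cg i • qg i) + ∑ i, ∑ h, ch i h • qh ⟨i, h⟩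
  have ef : ∀ v : V, f v = linObj cd cl cs cb cg ch
      ⟨v.1, v.2.1, v.2.2.1, v.2.2.2.1, v.2.2.2.2.1, v.2.2.2.2.2.1, v.2.2.2.2.2.2⟩ := by
    intro v
    simp [f, linObj, LinearMap.sum_apply, eqd, eql, eqs, eqb, eqg, eqh]
  obtain ⟨h1, h2, h3, h4, h5, h6, h7, h8, h9, h10, h11, h12⟩ := hx
  obtain ⟨μ, ν, hμ, hcomp, hid⟩ := kkt_lin A b B c f (x.d, x.l, x.zs, x.zb, x.g, x.gih, x.y)
    (by
      rintro (i | i | i | i | i | i | i | i | i | i) <;>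
        simp [A, b, eqd, eql, eqs, eqb, eqg, eqh, eqT, h1, h2, h3, h4, h5, h6, h8, h9, h11]
      linarith [(h11 i).1])
    (by
      rintro (i | i | i)
      · simp [B, c, eql, eqs, eqb, eqg]; linarith [h7 i]
      · simp [B, c, eqd, eqs, eqb, eqh, eqy, LinearMap.sum_apply]; linarith [h12 i]
      · simp [B, c, eqy, LinearMap.sum_apply, h10])
    (by
      intro v hv hve
      rw [ef, ef]
      apply hopt
      simp only [ι, Sum.forall, A, b, B, c, Sum.elim_inl, Sum.elim_inr, LinearMap.neg_apply,
        LinearMap.add_apply, LinearMap.sub_apply, LinearMap.sum_apply,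
        eqd, eql, eqs, eqb, eqg, eqh, eqT, eqy, Sigma.forall, neg_nonpos] at hv hve
      obtain ⟨g1, g2, g3, g4, g5, g6, g7, g8, g9, g10⟩ := hv
      obtain ⟨k1, k2, k3⟩ := hve
      exact ⟨g1, g2, g3, g4, g5, g6, fun i => by have := k1 i; simp only; linarith, g7, g8, k3 (),
        fun k => ⟨by have := g10 k; simp only; linarith, g9 k⟩, k2⟩)
  simp only [ι, Sum.forall, A, b, Sum.elim_inl, Sum.elim_inr, LinearMap.neg_apply,
    eqd, eql, eqs, eqb, eqg, eqh, eqT, Sigma.forall] at hμ hcomp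
  simp only [ι, Fintype.sum_sum_type, A, B, Sum.elim_inl, Sum.elim_inr, LinearMap.neg_apply,
        LinearMap.add_apply, LinearMap.sub_apply, LinearMap.sum_apply,
        eqd, eql, eqs, eqb, eqg, eqh, eqT, eqy, ef, linObj, Fintype.sum_sigma] at hid
  obtain ⟨m1, m2, m3, m4, m5, m6, m7, m8, m9, m10⟩ := hμ
  obtain ⟨r1, r2, r3, r4, r5, r6, r7, r8, r9, r10⟩ := hcomp
  clear hopt ef
  generalize hu : μ = μ' at *
  have ed : ∀ i, cd i = - μ' (.inl i) + ν (.inr (.inl i)) := by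
    intro i
    have := hid (Pi.single i 1, fun _ => 0, fun _ => 0, fun _ => 0, fun _ => 0, fun _ _ => 0, fun _ => 0)
    simp [Pi.single_apply] at this
    linarith
  have el : ∀ i, cl i = - μ' (.inr (.inl i)) + ν (.inl i) := by
    intro i
    have := hid (fun _ => 0, Pi.single i 1, fun _ => 0, fun _ => 0, fun _ => 0, fun _ _ => 0, fun _ => 0)
    simp [Pi.single_apply] at this
    linarith
  have es : ∀ i, cs i = - μ' (.inr (.inr (.inl i))) + ν (.inl i) - ν (.inr (.inl i)) := by
    intro i
    have := hid (fun _ => 0, fun _ => 0, Pi.single i 1, fun _ => 0, fun _ => 0, fun _ _ => 0, fun _ => 0)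
    simp [Pi.single_apply] at this
    linarith
  have eb : ∀ i, cb i = - μ' (.inr (.inr (.inr (.inl i)))) - ν (.inl i) + ν (.inr (.inl i)) := by
    intro i
    have := hid (fun _ => 0, fun _ => 0, fun _ => 0, Pi.single i 1, fun _ => 0, fun _ _ => 0, fun _ => 0)
    simp [Pi.single_apply] at this
    linarith
  have eg : ∀ i, cg i = - μ' (.inr (.inr (.inr (.inr (.inl i))))) - ν (.inl i)
      + μ' (.inr (.inr (.inr (.inr (.inr (.inr (.inl i))))))) := by
    intro i
    have := hid (fun _ => 0, fun _ => 0, fun _ => 0, fun _ => 0, Pi.single i 1, fun _ _ => 0, fun _ => 0)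
    simp [Pi.single_apply] at this
    linarith
  have eh : ∀ i h, ch i h = - μ' (.inr (.inr (.inr (.inr (.inr (.inl ⟨i, h⟩)))))) -
      ν (.inr (.inl i))
      + μ' (.inr (.inr (.inr (.inr (.inr (.inr (.inr (.inl ⟨i, h⟩)))))))) := by
    intro i h
    have := hid (fun _ => 0, fun _ => 0, fun _ => 0, fun _ => 0, fun _ => 0, Pi.single i (Pi.single h 1), fun _ => 0)
    have key : ∀ (w : (i : Fin N) → H i → ℝ),
        ∑ i', ∑ h', w i' h' * (Pi.single i (Pi.single h 1) : (i : Fin N) → H i → ℝ) i' h'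
          = w i h := by
      intro w
      rw [Finset.sum_eq_single i]
      · simp [Pi.single_apply]
      · intro i' _ hi'
        simp [Pi.single_eq_of_ne hi']
      · simp
    have k1 := key ch
    have k2 := key fun i h => μ' (.inr (.inr (.inr (.inr (.inr (.inl ⟨i, h⟩))))))
    have k3 := key fun i h => μ' (.inr (.inr (.inr (.inr (.inr (.inr (.inr (.inl ⟨i, h⟩))))))))
    have k4 := key fun i h => ν (.inr (.inl i))
    simp only [← Finset.mul_sum] at k4
    simp [k1, k2, k3, k4] at this
    linarith
  have ey : ∀ i, 0 = ∑ k, PTDF k i *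
      (μ' (.inr (.inr (.inr (.inr (.inr (.inr (.inr (.inr (.inl k))))))))) -
       μ' (.inr (.inr (.inr (.inr (.inr (.inr (.inr (.inr (.inr k))))))))))
      + ν (.inr (.inl i)) + ν (.inr (.inr ())) := by
    intro i
    have := hid (fun _ => 0, fun _ => 0, fun _ => 0, fun _ => 0, fun _ => 0, fun _ _ => 0, Pi.single i 1)
    simp [Pi.single_apply] at this
    simp only [mul_sub, Finset.sum_sub_distrib]
    simp only [mul_comm (PTDF _ _)]
    linarith
  refine ⟨fun i => ν (.inl i), fun i => μ' (.inr (.inr (.inr (.inr (.inr (.inr (.inl i))))))),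
    fun i h => μ' (.inr (.inr (.inr (.inr (.inr (.inr (.inr (.inl ⟨i, h⟩)))))))),
    ν (.inr (.inr ())),
    fun k => μ' (.inr (.inr (.inr (.inr (.inr (.inr (.inr (.inr (.inl k))))))))),
    fun k => μ' (.inr (.inr (.inr (.inr (.inr (.inr (.inr (.inr (.inr k))))))))),
    fun i => ν (.inr (.inl i)), m7, m8, m9, m10, ?_, ?_, ?_, ?_, ?_, ?_, ?_, ?_, ?_, ?_, ?_⟩
  · intro i
    exact ⟨h1 i, by linarith [ed i, m1 i], by rw [ed i]; linarith [r1 i]⟩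
  · intro i
    exact ⟨h2 i, by linarith [el i, m2 i], by rw [el i]; linarith [r2 i]⟩
  · intro i
    exact ⟨h5 i, by linarith [eg i, m5 i], by rw [eg i]; linarith [r5 i]⟩
  · intro i
    exact ⟨m7 i, by linarith [h8 i], r7 i⟩
  · intro i
    exact ⟨h3 i, by linarith [es i, m3 i], by rw [es i]; linarith [r3 i]⟩
  · intro i
    exact ⟨h4 i, by linarith [eb i, m4 i], by rw [eb i]; linarith [r4 i]⟩
  · intro i h
    exact ⟨h6 i h, by linarith [eh i h, m6 i h], by rw [eh i h]; linarith [r6 i h]⟩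
  · intro i h
    exact ⟨m8 i h, by linarith [h9 i h], r8 i h⟩
  · intro i
    have := ey i
    simp only [mul_sub, Finset.sum_sub_distrib] at this ⊢
    linarith
  · intro k
    exact ⟨m9 k, by linarith [(h11 k).2], r9 k⟩
  · intro k
    exact ⟨m10 k, by linarith [(h11 k).1], r10 k⟩

theorem lp_weak {N K : ℕ} {H : Fin N → Type} [∀ i, Fintype (H i)]
    (R Gp : Fin N → ℝ) (Gcap : (i : Fin N) → H i → ℝ)
    (T : Fin K → ℝ) (PTDF : Fin K → Fin N → ℝ)
    (cd cl cs cb cg : Fin N → ℝ) (ch : (i : Fin N) → H i → ℝ)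
    (x x' : LVec N H) (hx : FeasX R Gp Gcap T PTDF x) (hx' : FeasX R Gp Gcap T PTDF x')
    (δ κ : Fin N → ℝ) (ρ : (i : Fin N) → H i → ℝ) (θ : ℝ)
    (lp lm : Fin K → ℝ) (p : Fin N → ℝ)
    (q1 : ∀ i, perp (x.d i) (cd i - p i))
    (q2 : ∀ i, perp (x.l i) (cl i - δ i))
    (q3 : ∀ i, perp (x.g i) (cg i + δ i - κ i))
    (q4 : ∀ i, perp (κ i) (x.g i - Gp i))
    (q5 : ∀ i, perp (x.zs i) (cs i + p i - δ i))
    (q6 : ∀ i, perp (x.zb i) (cb i - p i + δ i))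
    (q7 : ∀ i (h : H i), perp (x.gih i h) (ch i h - ρ i h + p i))
    (q8 : ∀ i (h : H i), perp (ρ i h) (x.gih i h - Gcap i h))
    (q9 : ∀ i, -θ + (∑ k, PTDF k i * (lm k - lp k)) - p i = 0)
    (q10 : ∀ k, perp (lp k) ((∑ i, PTDF k i * x.y i) - T k))
    (q11 : ∀ k, perp (lm k) (-(∑ i, PTDF k i * x.y i) - T k)) :
    linObj cd cl cs cb cg ch x' ≤ linObj cd cl cs cb cg ch x := by
  obtain ⟨h1, h2, h3, h4, h5, h6, h7, h8, h9, h10, h11, h12⟩ := hx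
  obtain ⟨g1, g2, g3, g4, g5, g6, g7, g8, g9, g10, g11, g12⟩ := hx'
  have gen : ∀ {u w c : ℝ}, perp u c → 0 ≤ w → c * w ≤ c * u := by
    intro u w c h hw
    have := mul_nonpos_of_nonpos_of_nonneg h.2.1 hw
    have := h.2.2
    linarith
  have gen2 : ∀ {k u w c : ℝ}, perp k (u - c) → w ≤ c → k * w ≤ k * u := by
    intro k u w c h hw
    have := mul_nonneg h.1 (sub_nonneg.2 hw)
    have := h.2.2
    linarith
  -- per-node bound
  have hnode : ∀ i, cd i * x'.d i + cl i * x'.l i + cs i * x'.zs i + cb i * x'.zb i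
      + cg i * x'.g i + ∑ h, ch i h * x'.gih i h + p i * x'.y i ≤
      cd i * x.d i + cl i * x.l i + cs i * x.zs i + cb i * x.zb i
      + cg i * x.g i + ∑ h, ch i h * x.gih i h + p i * x.y i - 2 * (p i * x'.y i - p i * x.y i)
      + 2 * (p i * x'.y i - p i * x.y i) := by
    intro i
    have a1 := gen (q1 i) (g1 i)
    have a2 := gen (q2 i) (g2 i)
    have a3 := gen (q3 i) (g5 i)
    have a4 := gen2 (q4 i) (g8 i)
    have a5 := gen (q5 i) (g3 i)
    have a6 := gen (q6 i) (g4 i)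
    have a7 : ∑ h, ch i h * x'.gih i h + p i * ∑ h, x'.gih i h ≤
        ∑ h, ch i h * x.gih i h + p i * ∑ h, x.gih i h := by
      rw [Finset.mul_sum, Finset.mul_sum, ← Finset.sum_add_distrib, ← Finset.sum_add_distrib]
      refine Finset.sum_le_sum fun h _ => ?_
      have b1 := gen (q7 i h) (g6 i h)
      have b2 := gen2 (q8 i h) (g9 i h)
      linarith
    have e1 : δ i * (x'.l i + x'.zs i - x'.zb i - x'.g i) =
      δ i * (x.l i + x.zs i - x.zb i - x.g i) := by
      congr 1; linarith [h7 i, g7 i]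
    have e2 : p i * (x'.y i - (∑ h, x'.gih i h) - (x'.zs i - x'.zb i) + x'.d i) =
      p i * (x.y i - (∑ h, x.gih i h) - (x.zs i - x.zb i) + x.d i) := by
      rw [h12, g12]
    linarith
  have hsum := Finset.sum_le_sum fun i (_ : i ∈ Finset.univ) => hnode i
  have hp : ∀ z : Fin N → ℝ, ∑ i, z i = 0 → ∑ i, p i * z i =
      ∑ k, (lm k - lp k) * ∑ i, PTDF k i * z i := by
    intro z hz
    have : ∀ i, p i * z i = -θ * z i + ∑ k, (lm k - lp k) * (PTDF k i * z i) := by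
      intro i
      have e : p i = -θ + (∑ k, PTDF k i * (lm k - lp k)) := by linarith [q9 i]
      rw [e, add_mul, Finset.sum_mul]
      congr 1
      exact Finset.sum_congr rfl fun k _ => by ring
    rw [Finset.sum_congr rfl fun i _ => this i, Finset.sum_add_distrib, ← Finset.mul_sum, hz,
      Finset.sum_comm]
    simp [Finset.mul_sum]
  have hpy : ∑ i, p i * x.y i ≤ ∑ i, p i * x'.y i := by
    rw [hp _ h10, hp _ g10]
    refine Finset.sum_le_sum fun k _ => ?_
    have b1 := gen2 (q10 k) (g11 k).2
    have b2 := gen2 (q11 k) (by linarith [(g11 k).1] : -(∑ i, PTDF k i * x'.y i) ≤ T k)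
    linarith
  unfold linObj
  simp only [Finset.sum_add_distrib, Finset.sum_sub_distrib, ← Finset.mul_sum] at hsum
  linarith

theorem surplus_eq {N : ℕ} {H : Fin N → Type} [∀ i, Fintype (H i)]
    (P0 Q0 α : Fin N → ℝ) (Cg : Fin N → ℝ → ℝ) (a A : (i : Fin N) → H i → ℝ)
    (τb τs : ℝ) (x : LVec N H) : surplus P0 Q0 α Cg a A τb τs x =
    (∑ i, (P0 i * x.d i - P0 i / ((1 - α i) * Q0 i) * x.d i ^ 2 / 2 - τb * x.d i))
    + (∑ i, (P0 i * x.l i - P0 i / (α i * Q0 i) * x.l i ^ 2 / 2))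
    + (∑ i, τs * x.zs i) + (∑ i, (-τb) * x.zb i) + (∑ i, - Cg i (x.g i))
    + ∑ i, ∑ h, - (a i h * x.gih i h + (1 / 2) * A i h * (x.gih i h) ^ 2) := by
  unfold surplus
  simp only [integral_lin, Finset.sum_add_distrib, Finset.sum_sub_distrib, Finset.sum_neg_distrib,
    neg_mul, neg_add]
  ring

/-- The gradient pairing at one point evaluated at another. -/
noncomputable def gradObj {N : ℕ} {H : Fin N → Type} [∀ i, Fintype (H i)]
    (P0 Q0 α : Fin N → ℝ) (Cg : Fin N → ℝ → ℝ) (a A : (i : Fin N) → H i → ℝ)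
    (τb τs : ℝ) (x x' : LVec N H) : ℝ :=
  linObj (fun i => P0 i - P0 i / ((1 - α i) * Q0 i) * x.d i - τb)
    (fun i => P0 i - P0 i / (α i * Q0 i) * x.l i) (fun _ => τs) (fun _ => -τb)
    (fun i => - deriv (Cg i) (x.g i)) (fun i h => -(a i h + A i h * x.gih i h)) x'

theorem surplus_le_grad {N : ℕ} {H : Fin N → Type} [∀ i, Fintype (H i)]
    (P0 Q0 α : Fin N → ℝ) (Cg : Fin N → ℝ → ℝ) (a A : (i : Fin N) → H i → ℝ)
    (τb τs : ℝ) (x x' : LVec N H)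
    (hP0 : ∀ i, 0 < P0 i) (hQ0 : ∀ i, 0 < Q0 i)
    (hα0 : ∀ i, 0 < α i) (hα1 : ∀ i, α i < 1)
    (hCg : ∀ i, ContDiff ℝ 1 (Cg i)) (hCgconv : ∀ i, StrictConvexOn ℝ Set.univ (Cg i))
    (hA : ∀ i (h : H i), 0 < A i h) :
    surplus P0 Q0 α Cg a A τb τs x' - surplus P0 Q0 α Cg a A τb τs x ≤
    gradObj P0 Q0 α Cg a A τb τs x x' - gradObj P0 Q0 α Cg a A τb τs x x := by
  rw [surplus_eq, surplus_eq]
  unfold gradObj linObj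
  have quad : ∀ {c : ℝ} (u w : ℝ), 0 < c → c * (u * w) ≤ c * u ^ 2 / 2 + c * w ^ 2 / 2 := by
    intro c u w hc
    nlinarith [mul_nonneg hc.le (sq_nonneg (u - w))]
  have s1 := Finset.sum_le_sum fun i (_ : i ∈ Finset.univ) =>
    quad (x.d i) (x'.d i) (div_pos (hP0 i) (mul_pos (sub_pos.2 (hα1 i)) (hQ0 i)))
  have s2 := Finset.sum_le_sum fun i (_ : i ∈ Finset.univ) =>
    quad (x.l i) (x'.l i) (div_pos (hP0 i) (mul_pos (hα0 i) (hQ0 i)))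
  have s3 := Finset.sum_le_sum fun i (_ : i ∈ Finset.univ) =>
    convex_tangent (hCgconv i).convexOn ((hCg i).differentiable one_ne_zero) (x.g i) (x'.g i)
  have s4 := Finset.sum_le_sum fun i (_ : i ∈ Finset.univ) =>
    Finset.sum_le_sum fun h (_ : h ∈ Finset.univ) => quad (x.gih i h) (x'.gih i h) (hA i h)
  have t1 : ∑ i, (P0 i * x'.d i - P0 i / ((1 - α i) * Q0 i) * x'.d i ^ 2 / 2 - τb * x'.d i)
      - ∑ i, (P0 i * x.d i - P0 i / ((1 - α i) * Q0 i) * x.d i ^ 2 / 2 - τb * x.d i) ≤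
      ∑ i, (P0 i - P0 i / ((1 - α i) * Q0 i) * x.d i - τb) * x'.d i
      - ∑ i, (P0 i - P0 i / ((1 - α i) * Q0 i) * x.d i - τb) * x.d i := by
    rw [← Finset.sum_sub_distrib, ← Finset.sum_sub_distrib]
    refine Finset.sum_le_sum fun i _ => ?_
    have := quad (x.d i) (x'.d i) (div_pos (hP0 i) (mul_pos (sub_pos.2 (hα1 i)) (hQ0 i)))
    linarith
  have t2 : ∑ i, (P0 i * x'.l i - P0 i / (α i * Q0 i) * x'.l i ^ 2 / 2)
      - ∑ i, (P0 i * x.l i - P0 i / (α i * Q0 i) * x.l i ^ 2 / 2) ≤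
      ∑ i, (P0 i - P0 i / (α i * Q0 i) * x.l i) * x'.l i
      - ∑ i, (P0 i - P0 i / (α i * Q0 i) * x.l i) * x.l i := by
    rw [← Finset.sum_sub_distrib, ← Finset.sum_sub_distrib]
    refine Finset.sum_le_sum fun i _ => ?_
    have := quad (x.l i) (x'.l i) (div_pos (hP0 i) (mul_pos (hα0 i) (hQ0 i)))
    linarith
  have t3 : ∑ i, - Cg i (x'.g i) - ∑ i, - Cg i (x.g i) ≤
      ∑ i, - deriv (Cg i) (x.g i) * x'.g i - ∑ i, - deriv (Cg i) (x.g i) * x.g i := by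
    rw [← Finset.sum_sub_distrib, ← Finset.sum_sub_distrib]
    refine Finset.sum_le_sum fun i _ => ?_
    have := convex_tangent (hCgconv i).convexOn ((hCg i).differentiable one_ne_zero)
      (x.g i) (x'.g i)
    linarith
  have t4 : ∑ i, ∑ h, - (a i h * x'.gih i h + (1 / 2) * A i h * (x'.gih i h) ^ 2)
      - ∑ i, ∑ h, - (a i h * x.gih i h + (1 / 2) * A i h * (x.gih i h) ^ 2) ≤
      ∑ i, ∑ h, -(a i h + A i h * x.gih i h) * x'.gih i h
      - ∑ i, ∑ h, -(a i h + A i h * x.gih i h) * x.gih i h := by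
    rw [← Finset.sum_sub_distrib, ← Finset.sum_sub_distrib]
    refine Finset.sum_le_sum fun i _ => ?_
    rw [← Finset.sum_sub_distrib, ← Finset.sum_sub_distrib]
    refine Finset.sum_le_sum fun h _ => ?_
    have := quad (x.gih i h) (x'.gih i h) (hA i h)
    linarith
  linarith

/-- The convex combination of two points. -/
def mix {N : ℕ} {H : Fin N → Type} (x x' : LVec N H) (t : ℝ) : LVec N H where
  d i := x.d i + t * (x'.d i - x.d i)
  l i := x.l i + t * (x'.l i - x.l i)
  zs i := x.zs i + t * (x'.zs i - x.zs i)
  zb i := x.zb i + t * (x'.zb i - x.zb i)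
  g i := x.g i + t * (x'.g i - x.g i)
  gih i h := x.gih i h + t * (x'.gih i h - x.gih i h)
  y i := x.y i + t * (x'.y i - x.y i)

theorem feas_mix {N K : ℕ} {H : Fin N → Type} [∀ i, Fintype (H i)]
    (R Gp : Fin N → ℝ) (Gcap : (i : Fin N) → H i → ℝ)
    (T : Fin K → ℝ) (PTDF : Fin K → Fin N → ℝ)
    (x x' : LVec N H) (hx : FeasX R Gp Gcap T PTDF x) (hx' : FeasX R Gp Gcap T PTDF x')
    (t : ℝ) (ht0 : 0 ≤ t) (ht1 : t ≤ 1) : FeasX R Gp Gcap T PTDF (mix x x' t) := by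
  obtain ⟨h1, h2, h3, h4, h5, h6, h7, h8, h9, h10, h11, h12⟩ := hx
  obtain ⟨g1, g2, g3, g4, g5, g6, g7, g8, g9, g10, g11, g12⟩ := hx'
  have up : ∀ {u w c : ℝ}, u ≤ c → w ≤ c → u + t * (w - u) ≤ c := by
    intro u w c hu hw
    nlinarith [mul_nonneg ht0 (sub_nonneg.2 hw), mul_nonneg (sub_nonneg.2 ht1) (sub_nonneg.2 hu)]
  have lo : ∀ {u w c : ℝ}, c ≤ u → c ≤ w → c ≤ u + t * (w - u) := by
    intro u w c hu hw
    nlinarith [mul_nonneg ht0 (sub_nonneg.2 hw), mul_nonneg (sub_nonneg.2 ht1) (sub_nonneg.2 hu)]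
  have hs : ∀ k, ∑ i, PTDF k i * (x.y i + t * (x'.y i - x.y i)) =
      ∑ i, PTDF k i * x.y i + t * (∑ i, PTDF k i * x'.y i - ∑ i, PTDF k i * x.y i) := by
    intro k
    rw [← Finset.sum_sub_distrib, Finset.mul_sum, ← Finset.sum_add_distrib]
    exact Finset.sum_congr rfl fun i _ => by ring
  refine ⟨fun i => lo (h1 i) (g1 i), fun i => lo (h2 i) (g2 i), fun i => lo (h3 i) (g3 i),
    fun i => lo (h4 i) (g4 i), fun i => lo (h5 i) (g5 i), fun i h => lo (h6 i h) (g6 i h), ?_,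
    fun i => up (h8 i) (g8 i), fun i h => up (h9 i h) (g9 i h), ?_, ?_, ?_⟩
  · intro i
    simp only [mix]
    linear_combination (1 - t) * h7 i + t * g7 i
  · simp only [mix, Finset.sum_add_distrib, ← Finset.mul_sum, Finset.sum_sub_distrib, h10, g10]
    ring
  · intro k
    simp only [mix, hs]
    exact ⟨lo (h11 k).1 (g11 k).1, up (h11 k).2 (g11 k).2⟩
  · intro i
    simp only [mix, Finset.sum_add_distrib, ← Finset.mul_sum, Finset.sum_sub_distrib]
    linear_combination (1 - t) * h12 i + t * g12 i

theorem hasDerivAt_mix {N : ℕ} {H : Fin N → Type} [∀ i, Fintype (H i)]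
    (P0 Q0 α : Fin N → ℝ) (Cg : Fin N → ℝ → ℝ) (a A : (i : Fin N) → H i → ℝ)
    (τb τs : ℝ) (x x' : LVec N H) (hCg : ∀ i, ContDiff ℝ 1 (Cg i)) :
    HasDerivAt (fun t => surplus P0 Q0 α Cg a A τb τs (mix x x' t))
      (gradObj P0 Q0 α Cg a A τb τs x x' - gradObj P0 Q0 α Cg a A τb τs x x) 0 := by
  have hl : ∀ u v : ℝ, HasDerivAt (fun t : ℝ => u + t * (v - u)) (v - u) 0 := by
    intro u v
    simpa using ((hasDerivAt_id (0:ℝ)).mul_const (v - u)).const_add u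
  have hq : ∀ P c u v : ℝ, HasDerivAt
      (fun t : ℝ => P * (u + t * (v - u)) + c * (u + t * (v - u)) ^ 2)
      ((P + 2 * c * u) * v - (P + 2 * c * u) * u) 0 := by
    intro P c u v
    refine (((hl u v).const_mul P).add (((hl u v).pow 2).const_mul c)).congr_deriv ?_
    simp
    ring
  simp only [surplus_eq, gradObj, linObj, mix]
  have D1 := HasDerivAt.fun_sum (u := Finset.univ) fun i (_ : i ∈ Finset.univ) =>
    hq (P0 i - τb) (-(P0 i / ((1 - α i) * Q0 i)) / 2) (x.d i) (x'.d i)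
  have D2 := HasDerivAt.fun_sum (u := Finset.univ) fun i (_ : i ∈ Finset.univ) =>
    hq (P0 i) (-(P0 i / (α i * Q0 i)) / 2) (x.l i) (x'.l i)
  have D3 := HasDerivAt.fun_sum (u := Finset.univ) fun i (_ : i ∈ Finset.univ) =>
    hq τs 0 (x.zs i) (x'.zs i)
  have D4 := HasDerivAt.fun_sum (u := Finset.univ) fun i (_ : i ∈ Finset.univ) =>
    hq (-τb) 0 (x.zb i) (x'.zb i)
  have hc : ∀ i, HasDerivAt (fun t : ℝ => - Cg i (x.g i + t * (x'.g i - x.g i)))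
      (- (deriv (Cg i) (x.g i) * (x'.g i - x.g i))) 0 := by
    intro i
    have := (((hCg i).differentiable one_ne_zero)
      (x.g i + 0 * (x'.g i - x.g i))).hasDerivAt.comp (0:ℝ) (hl (x.g i) (x'.g i))
    have := this.fun_neg
    simpa [Function.comp_def] using this
  have D5 := HasDerivAt.fun_sum (u := Finset.univ) fun i (_ : i ∈ Finset.univ) => hc i
  have D6 := HasDerivAt.fun_sum (u := Finset.univ) fun i (_ : i ∈ Finset.univ) =>
    HasDerivAt.fun_sum (u := Finset.univ) fun h (_ : h ∈ Finset.univ) =>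
    hq (- a i h) (- A i h / 2) (x.gih i h) (x'.gih i h)
  refine ((((((D1.add D2).add D3).add D4).add D5).add D6).congr_of_eventuallyEq
    (Filter.Eventually.of_forall fun t => ?_)).congr_deriv ?_
  · simp only [Pi.add_apply]
    congr 1
    · congr 1
      congr 1
      · congr 1
        · congr 1
          · exact Finset.sum_congr rfl fun i _ => by ring
          · exact Finset.sum_congr rfl fun i _ => by ring
        · exact Finset.sum_congr rfl fun i _ => by ring
      · exact Finset.sum_congr rfl fun i _ => by ring
    · exact Finset.sum_congr rfl fun i _ => Finset.sum_congr rfl fun h _ => by ring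
  · simp only [← Finset.sum_add_distrib, ← Finset.sum_sub_distrib]
    refine Finset.sum_congr rfl fun i _ => ?_
    have e6 : ∑ h, ((- a i h + 2 * (- A i h / 2) * x.gih i h) * x'.gih i h -
        (- a i h + 2 * (- A i h / 2) * x.gih i h) * x.gih i h) =
        ∑ h, -(a i h + A i h * x.gih i h) * x'.gih i h
        - ∑ h, -(a i h + A i h * x.gih i h) * x.gih i h := by
      rw [← Finset.sum_sub_distrib]
      exact Finset.sum_congr rfl fun h _ => by ring
    rw [e6]
    ring

/-- (Planner optimality is equivalent to the market-equilibrium complementarity system.) -/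
theorem planner_optimal_iff_equilibrium_KKT
    (N K : ℕ) (hN : 1 ≤ N)
    (H : Fin N → Type) [∀ i, Fintype (H i)]
    (P0 Q0 α R Gp : Fin N → ℝ) (Cg : Fin N → ℝ → ℝ)
    (a A Gcap : (i : Fin N) → H i → ℝ)
    (T : Fin K → ℝ) (PTDF : Fin K → Fin N → ℝ)
    (hP0 : ∀ i, 0 < P0 i) (hQ0 : ∀ i, 0 < Q0 i)
    (hα0 : ∀ i, 0 < α i) (hα1 : ∀ i, α i < 1)
    (hR : ∀ i, 0 < R i) (hGp : ∀ i, 0 ≤ Gp i)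
    (hCg : ∀ i, ContDiff ℝ 1 (Cg i)) (hCgconv : ∀ i, StrictConvexOn ℝ Set.univ (Cg i))
    (hGcap : ∀ i (h : H i), 0 ≤ Gcap i h)
    (ha : ∀ i (h : H i), 0 < a i h) (hA : ∀ i (h : H i), 0 < A i h)
    (hT : ∀ k, 0 < T k)
    (τb τs : ℝ) (hτb : 0 ≤ τb) (hτ : τs ≤ τb)
    (x : LVec N H) (hx : FeasX R Gp Gcap T PTDF x) :
    (∀ x' : LVec N H, FeasX R Gp Gcap T PTDF x' →
        surplus P0 Q0 α Cg a A τb τs x' ≤ surplus P0 Q0 α Cg a A τb τs x) ↔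
    ∃ (δ κ : Fin N → ℝ) (ρ : (i : Fin N) → H i → ℝ) (θ : ℝ)
      (lp lm : Fin K → ℝ) (p : Fin N → ℝ),
      (∀ i, 0 ≤ κ i) ∧ (∀ i (h : H i), 0 ≤ ρ i h) ∧
      (∀ k, 0 ≤ lp k) ∧ (∀ k, 0 ≤ lm k) ∧
      (∀ i, perp (x.d i) (P0 i - (P0 i / ((1 - α i) * Q0 i)) * x.d i - (p i + τb))) ∧
      (∀ i, perp (x.l i) (P0 i - (P0 i / (α i * Q0 i)) * x.l i - δ i)) ∧
      (∀ i, perp (x.g i) (-(deriv (Cg i) (x.g i)) + δ i - κ i)) ∧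
      (∀ i, perp (κ i) (x.g i - Gp i)) ∧
      (∀ i, perp (x.zs i) ((p i + τs) - δ i)) ∧
      (∀ i, perp (x.zb i) (-(p i + τb) + δ i)) ∧
      (∀ i (h : H i), perp (x.gih i h) (-(a i h + A i h * x.gih i h) - ρ i h + p i)) ∧
      (∀ i (h : H i), perp (ρ i h) (x.gih i h - Gcap i h)) ∧
      (∀ i, -θ + (∑ k, PTDF k i * (lm k - lp k)) - p i = 0) ∧
      (∀ k, perp (lp k) ((∑ i, PTDF k i * x.y i) - T k)) ∧
      (∀ k, perp (lm k) (-(∑ i, PTDF k i * x.y i) - T k)) := by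
  have key := lp_dual R Gp Gcap T PTDF
    (fun i => P0 i - P0 i / ((1 - α i) * Q0 i) * x.d i - τb)
    (fun i => P0 i - P0 i / (α i * Q0 i) * x.l i) (fun _ => τs) (fun _ => -τb)
    (fun i => - deriv (Cg i) (x.g i)) (fun i h => -(a i h + A i h * x.gih i h)) x hx
  constructor
  · intro hopt
    obtain ⟨δ, κ, ρ, θ, lp, lm, p, k1, k2, k3, k4, q1, q2, q3, q4, q5, q6, q7, q8, q9, q10, q11⟩ :=
      key (by
        intro x' hx'
        have hm0 : mix x x' 0 = x := by simp [mix]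
        have := deriv_nonpos_of_max (hasDerivAt_mix P0 Q0 α Cg a A τb τs x x' hCg) (by
          intro t h0 h1
          simp only [hm0]
          exact hopt _ (feas_mix R Gp Gcap T PTDF x x' hx hx' t h0.le h1))
        exact sub_nonpos.1 this)
    refine ⟨δ, κ, ρ, θ, lp, lm, p, k1, k2, k3, k4, fun i => ?_, q2, q3, q4, fun i => ?_,
      fun i => ?_, q7, q8, q9, q10, q11⟩
    · convert q1 i using 1; ring
    · convert q5 i using 1; ring
    · convert q6 i using 1; ring
  · rintro ⟨δ, κ, ρ, θ, lp, lm, p, k1, k2, k3, k4, q1, q2, q3, q4, q5, q6, q7, q8, q9, q10, q11⟩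
      x' hx'
    have hw := lp_weak R Gp Gcap T PTDF
      (fun i => P0 i - P0 i / ((1 - α i) * Q0 i) * x.d i - τb)
      (fun i => P0 i - P0 i / (α i * Q0 i) * x.l i) (fun _ => τs) (fun _ => -τb)
      (fun i => - deriv (Cg i) (x.g i)) (fun i h => -(a i h + A i h * x.gih i h)) x x' hx hx'
      δ κ ρ θ lp lm p (fun i => by convert q1 i using 1; ring) q2 q3 q4
      (fun i => by convert q5 i using 1; ring) (fun i => by convert q6 i using 1; ring)
      q7 q8 q9 q10 q11
    have hg := surplus_le_grad P0 Q0 α Cg a A τb τs x x' hP0 hQ0 hα0 hα1 hCg hCgconv hA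
    unfold gradObj at hg
    linarith
end

section
/- (Continuity and attainment of the maximum of the optimal value function.) The optimal value function V is continuous on the rate set 𝒯, and V attains its maximum over 𝒯: there exists (τb*, τs*) ∈ 𝒯 with V(τb*, τs*) ≥ V(τb, τs) for all (τb, τs) ∈ 𝒯. -/
lemma surplus_split {N : ℕ} {H : Fin N → Type} [∀ i, Fintype (H i)]
    (P0 Q0 α : Fin N → ℝ) (Cg : Fin N → ℝ → ℝ) (a A : (i : Fin N) → H i → ℝ)
    (τb τs : ℝ) (x : LVec N H) :
    surplus P0 Q0 α Cg a A τb τs x = surplus P0 Q0 α Cg a A 0 0 x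
      - τb * (∑ i, (x.d i + x.zb i)) + τs * ∑ i, x.zs i := by
  simp only [surplus, Finset.mul_sum, Finset.sum_sub_distrib, Finset.sum_add_distrib, mul_add]
  simp only [zero_mul, Finset.sum_const_zero]
  ring

lemma integral_le_aux (P c d M : ℝ) (hP : 0 ≤ P) (hc : 0 ≤ c) (hd : 0 ≤ d) (hM : d ≤ M) :
    (∫ m in (0:ℝ)..d, (P - c * m)) ≤ P * M := by
  have h1 : (∫ m in (0:ℝ)..d, (P - c * m)) ≤ ∫ _m in (0:ℝ)..d, P := by
    apply intervalIntegral.integral_mono_on hd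
    · exact (by fun_prop : Continuous fun m : ℝ => P - c * m).intervalIntegrable _ _
    · exact continuous_const.intervalIntegrable _ _
    · intro m hm
      have := mul_nonneg hc hm.1
      linarith
  refine h1.trans ?_
  simp only [intervalIntegral.integral_const, smul_eq_mul, sub_zero]
  nlinarith

/-- Remove simultaneous buying and selling. -/
noncomputable def reduceVec {N : ℕ} {H : Fin N → Type} (x : LVec N H) : LVec N H :=
  { x with
    zs := fun i => x.zs i - min (x.zs i) (x.zb i)
    zb := fun i => x.zb i - min (x.zs i) (x.zb i) }

lemma reduce_feas {N K : ℕ} {H : Fin N → Type} [∀ i, Fintype (H i)]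
    (R Gp : Fin N → ℝ) (Gcap : (i : Fin N) → H i → ℝ)
    (T : Fin K → ℝ) (PTDF : Fin K → Fin N → ℝ) (x : LVec N H)
    (hx : FeasX R Gp Gcap T PTDF x) : FeasX R Gp Gcap T PTDF (reduceVec x) := by
  obtain ⟨h1, h2, h3, h4, h5, h6, h7, h8, h9, h10, h11, h12⟩ := hx
  refine ⟨h1, h2, fun i => ?_, fun i => ?_, h5, h6, fun i => ?_, h8, h9, h10, h11, fun i => ?_⟩
  · exact sub_nonneg.2 (min_le_left _ _)
  · exact sub_nonneg.2 (min_le_right _ _)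
  · have := h7 i
    simp only [reduceVec]
    linarith
  · have := h12 i
    simp only [reduceVec]
    linarith

lemma reduce_surplus {N K : ℕ} {H : Fin N → Type} [∀ i, Fintype (H i)]
    (P0 Q0 α : Fin N → ℝ) (Cg : Fin N → ℝ → ℝ) (a A : (i : Fin N) → H i → ℝ)
    (R Gp : Fin N → ℝ) (Gcap : (i : Fin N) → H i → ℝ)
    (T : Fin K → ℝ) (PTDF : Fin K → Fin N → ℝ) (x : LVec N H)
    (hx : FeasX R Gp Gcap T PTDF x) (τb τs : ℝ) (hτ : τs ≤ τb) :
    surplus P0 Q0 α Cg a A τb τs x ≤ surplus P0 Q0 α Cg a A τb τs (reduceVec x) := by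
  obtain ⟨h1, h2, h3, h4, h5, h6, h7, h8, h9, h10, h11, h12⟩ := hx
  unfold surplus
  simp only [reduceVec]
  refine sub_le_sub (add_le_add le_rfl ?_) le_rfl
  apply Finset.sum_le_sum
  intro i _
  have hm : 0 ≤ min (x.zs i) (x.zb i) := le_min (h3 i) (h4 i)
  nlinarith

lemma reduce_bounds {N K : ℕ} {H : Fin N → Type} [∀ i, Fintype (H i)]
    (R Gp : Fin N → ℝ) (Gcap : (i : Fin N) → H i → ℝ)
    (T : Fin K → ℝ) (PTDF : Fin K → Fin N → ℝ)
    (hR : ∀ i, 0 < R i)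
    (hGcap : ∀ i (h : H i), 0 ≤ Gcap i h) (x : LVec N H)
    (hx : FeasX R Gp Gcap T PTDF x) :
    (∑ i, (x.d i + x.l i) ≤ ∑ i, ((∑ h, Gcap i h) + Gp i + R i)) ∧
    (∑ i, ((reduceVec x).d i + (reduceVec x).zb i) ≤ ∑ i, ((∑ h, Gcap i h) + Gp i + R i)) ∧
    (∑ i, (reduceVec x).zs i ≤ ∑ i, ((∑ h, Gcap i h) + Gp i + R i)) := by
  obtain ⟨h1, h2, h3, h4, h5, h6, h7, h8, h9, h10, h11, h12⟩ := hx
  have e : ∑ i, (x.d i + x.l i) ≤ ∑ i, ((∑ h, Gcap i h) + Gp i + R i) := by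
    have : ∑ i, (x.d i + x.l i) = ∑ i, (x.d i + x.l i) + ∑ i, x.y i := by rw [h10, add_zero]
    rw [this, ← Finset.sum_add_distrib]
    apply Finset.sum_le_sum
    intro i _
    have s : ∑ h, x.gih i h ≤ ∑ h, Gcap i h := Finset.sum_le_sum fun h _ => h9 i h
    linarith [h7 i, h12 i, h8 i]
  refine ⟨e, le_trans (Finset.sum_le_sum ?_) e, Finset.sum_le_sum ?_⟩
  · intro i _
    simp only [reduceVec]
    rcases min_cases (x.zs i) (x.zb i) with h | h <;>
      linarith [h7 i, h2 i, h5 i, hR i]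
  · intro i _
    have s : 0 ≤ ∑ h, Gcap i h := Finset.sum_nonneg fun h _ => hGcap i h
    simp only [reduceVec]
    rcases min_cases (x.zs i) (x.zb i) with h | h <;>
      linarith [h7 i, h2 i, h5 i, hR i, h8 i]

lemma base_bound {N K : ℕ} {H : Fin N → Type} [∀ i, Fintype (H i)]
    (P0 Q0 α : Fin N → ℝ) (Cg : Fin N → ℝ → ℝ) (a A : (i : Fin N) → H i → ℝ)
    (R Gp : Fin N → ℝ) (Gcap : (i : Fin N) → H i → ℝ)
    (T : Fin K → ℝ) (PTDF : Fin K → Fin N → ℝ)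
    (hP0 : ∀ i, 0 < P0 i) (hQ0 : ∀ i, 0 < Q0 i)
    (hα0 : ∀ i, 0 < α i) (hα1 : ∀ i, α i < 1)
    (hR : ∀ i, 0 < R i)
    (hCg : ∀ i, ContDiff ℝ 1 (Cg i))
    (hGcap : ∀ i (h : H i), 0 ≤ Gcap i h)
    (ha : ∀ i (h : H i), 0 < a i h) (hA : ∀ i (h : H i), 0 < A i h) :
    ∃ B, ∀ x : LVec N H, FeasX R Gp Gcap T PTDF x → surplus P0 Q0 α Cg a A 0 0 x ≤ B := by
  have hb : ∀ i, ∃ b, ∀ t ∈ Set.Icc 0 (Gp i), b ≤ Cg i t := by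
    intro i
    obtain ⟨b, hb⟩ := (isCompact_Icc (a := (0:ℝ)) (b := Gp i)).bddBelow_image
      (hCg i).continuous.continuousOn
    exact ⟨b, fun t ht => hb ⟨t, ht, rfl⟩⟩
  choose b hb using hb
  refine ⟨∑ i, P0 i * (∑ i, ((∑ h, Gcap i h) + Gp i + R i))
    + ∑ i, (P0 i * (∑ i, ((∑ h, Gcap i h) + Gp i + R i)) - b i), fun x hx => ?_⟩
  obtain ⟨e, -, -⟩ := reduce_bounds R Gp Gcap T PTDF hR hGcap x hx
  obtain ⟨h1, h2, h3, h4, h5, h6, h7, h8, h9, h10, h11, h12⟩ := hx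
  have ei : ∀ i, x.d i + x.l i ≤ ∑ i, ((∑ h, Gcap i h) + Gp i + R i) := fun i =>
    (Finset.single_le_sum (f := fun i => x.d i + x.l i)
      (fun j _ => add_nonneg (h1 j) (h2 j)) (Finset.mem_univ i)).trans e
  have hc : 0 ≤ ∑ i, ∑ h, (a i h * x.gih i h + (1 / 2) * A i h * (x.gih i h) ^ 2) := by
    refine Finset.sum_nonneg fun i _ => Finset.sum_nonneg fun h _ => ?_
    have := ha i h
    have := hA i h
    have := h6 i h
    positivity
  have s1 : (∑ i, ((∫ m in (0:ℝ)..x.d i, (P0 i - (P0 i / ((1 - α i) * Q0 i)) * m)) - 0 * x.d i))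
      ≤ ∑ i, P0 i * (∑ i, ((∑ h, Gcap i h) + Gp i + R i)) := by
    refine Finset.sum_le_sum fun i _ => ?_
    have h : 0 ≤ P0 i / ((1 - α i) * Q0 i) :=
      div_nonneg (hP0 i).le (mul_nonneg (sub_nonneg.2 (hα1 i).le) (hQ0 i).le)
    have := integral_le_aux (P0 i) _ (x.d i) _ (hP0 i).le h (h1 i)
      (by linarith [ei i, h2 i] : x.d i ≤ ∑ i, ((∑ h, Gcap i h) + Gp i + R i))
    linarith
  have s2 : (∑ i, (0 * x.zs i - 0 * x.zb i
      + (∫ m in (0:ℝ)..x.l i, (P0 i - (P0 i / (α i * Q0 i)) * m)) - Cg i (x.g i)))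
      ≤ ∑ i, (P0 i * (∑ i, ((∑ h, Gcap i h) + Gp i + R i)) - b i) := by
    refine Finset.sum_le_sum fun i _ => ?_
    have h : 0 ≤ P0 i / (α i * Q0 i) :=
      div_nonneg (hP0 i).le (mul_nonneg (hα0 i).le (hQ0 i).le)
    have := integral_le_aux (P0 i) _ (x.l i) _ (hP0 i).le h (h2 i)
      (by linarith [ei i, h1 i] : x.l i ≤ ∑ i, ((∑ h, Gcap i h) + Gp i + R i))
    have := hb i (x.g i) ⟨h5 i, h8 i⟩
    linarith
  unfold surplus
  linarith

/-- (Continuity and attainment of the maximum of the optimal value function.) `V` is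
continuous on `𝒯` and attains its maximum over `𝒯`. -/
theorem value_function_continuous_and_max_attained
    (N K : ℕ) (hN : 1 ≤ N)
    (H : Fin N → Type) [∀ i, Fintype (H i)]
    (P0 Q0 α R Gp : Fin N → ℝ) (Cg : Fin N → ℝ → ℝ)
    (a A Gcap : (i : Fin N) → H i → ℝ)
    (T : Fin K → ℝ) (PTDF : Fin K → Fin N → ℝ)
    (hP0 : ∀ i, 0 < P0 i) (hQ0 : ∀ i, 0 < Q0 i)
    (hα0 : ∀ i, 0 < α i) (hα1 : ∀ i, α i < 1)
    (hR : ∀ i, 0 < R i) (hGp : ∀ i, 0 ≤ Gp i)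
    (hCg : ∀ i, ContDiff ℝ 1 (Cg i)) (hCgconv : ∀ i, StrictConvexOn ℝ Set.univ (Cg i))
    (hGcap : ∀ i (h : H i), 0 ≤ Gcap i h)
    (ha : ∀ i (h : H i), 0 < a i h) (hA : ∀ i (h : H i), 0 < A i h)
    (hT : ∀ k, 0 < T k)
    (τhat τlow : ℝ) (hτhat : 0 < τhat) (hτlow : τlow < 0) :
    ContinuousOn (fun τ => Vval P0 Q0 α Cg a A Gcap R Gp T PTDF τ) (Tset τhat τlow) ∧
    ∃ τstar ∈ Tset τhat τlow, ∀ τ ∈ Tset τhat τlow,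
      Vval P0 Q0 α Cg a A Gcap R Gp T PTDF τ ≤
        Vval P0 Q0 α Cg a A Gcap R Gp T PTDF τstar := by
  set M : ℝ := ∑ i, ((∑ h, Gcap i h) + Gp i + R i) with hMdef
  have hM : 0 ≤ M := Finset.sum_nonneg fun i _ => by
    have s : 0 ≤ ∑ h, Gcap i h := Finset.sum_nonneg fun h _ => hGcap i h
    linarith [hGp i, hR i]
  obtain ⟨B, hB⟩ := base_bound P0 Q0 α Cg a A R Gp Gcap T PTDF hP0 hQ0 hα0 hα1 hR hCg hGcap ha hA
  -- the surplus of a reduced vector is Lipschitz in the rates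
  have hlip : ∀ x : LVec N H, FeasX R Gp Gcap T PTDF x → ∀ τ σ : ℝ × ℝ,
      surplus P0 Q0 α Cg a A τ.1 τ.2 (reduceVec x) ≤
        surplus P0 Q0 α Cg a A σ.1 σ.2 (reduceVec x) + 2 * M * dist τ σ := by
    intro x hx τ σ
    obtain ⟨-, hD, hZ⟩ := reduce_bounds R Gp Gcap T PTDF hR hGcap x hx
    obtain ⟨h1, h2, h3, h4, -⟩ := reduce_feas R Gp Gcap T PTDF x hx
    have hD0 : 0 ≤ ∑ i, ((reduceVec x).d i + (reduceVec x).zb i) :=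
      Finset.sum_nonneg fun i _ => add_nonneg (h1 i) (h4 i)
    have hZ0 : 0 ≤ ∑ i, (reduceVec x).zs i := Finset.sum_nonneg fun i _ => h3 i
    rw [surplus_split P0 Q0 α Cg a A τ.1, surplus_split P0 Q0 α Cg a A σ.1]
    have d1 : |τ.1 - σ.1| ≤ dist τ σ := by
      rw [Prod.dist_eq, ← Real.dist_eq]; exact le_max_left _ _
    have d2 : |τ.2 - σ.2| ≤ dist τ σ := by
      rw [Prod.dist_eq, ← Real.dist_eq]; exact le_max_right _ _
    have e1 := (abs_le.1 d1).1
    have e2 := (abs_le.1 d2).2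
    have hd : 0 ≤ dist τ σ := dist_nonneg
    generalize (∑ i, ((reduceVec x).d i + (reduceVec x).zb i)) = D at *
    generalize (∑ i, (reduceVec x).zs i) = Z at *
    have f1 : (σ.1 - τ.1) * D ≤ dist τ σ * M :=
      mul_le_mul (by linarith) hD hD0 hd
    have f2 : (τ.2 - σ.2) * Z ≤ dist τ σ * M :=
      mul_le_mul e2 hZ hZ0 hd
    linarith
  have hbdd : ∀ τ ∈ Tset τhat τlow, BddAbove ((fun x => surplus P0 Q0 α Cg a A τ.1 τ.2 x) ''
      {x : LVec N H | FeasX R Gp Gcap T PTDF x}) := by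
    intro τ hτ
    refine ⟨B + 2 * M * dist τ (0, 0), ?_⟩
    rintro _ ⟨x, hx, rfl⟩
    have h1 := reduce_surplus P0 Q0 α Cg a A R Gp Gcap T PTDF x hx τ.1 τ.2 hτ.2.2.2
    have h2 := hlip x hx τ (0, 0)
    have h3 := hB _ (reduce_feas R Gp Gcap T PTDF x hx)
    simp only at h2 ⊢
    linarith
  have hne : ((fun x : LVec N H => FeasX R Gp Gcap T PTDF x)
      ⟨0, R, 0, 0, 0, 0, 0⟩) := by
    refine ⟨fun i => le_rfl, fun i => (hR i).le, fun i => le_rfl, fun i => le_rfl,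
      fun i => le_rfl, fun i h => le_rfl, fun i => by simp, hGp, hGcap, by simp,
      fun k => by simp [(hT k).le], fun i => by simp⟩
  have hLip : LipschitzOnWith ⟨2 * M, by positivity⟩
      (fun τ => Vval P0 Q0 α Cg a A Gcap R Gp T PTDF τ) (Tset τhat τlow) := by
    apply LipschitzOnWith.of_le_add_mul
    intro τ hτ σ hσ
    apply csSup_le
    · exact ⟨_, _, hne, rfl⟩
    · rintro _ ⟨x, hx, rfl⟩
      have h1 := reduce_surplus P0 Q0 α Cg a A R Gp Gcap T PTDF x hx τ.1 τ.2 hτ.2.2.2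
      have h2 := hlip x hx τ σ
      have h3 := le_csSup (hbdd σ hσ) ⟨_, reduce_feas R Gp Gcap T PTDF x hx, rfl⟩
      change surplus P0 Q0 α Cg a A τ.1 τ.2 x ≤
        sSup ((fun x => surplus P0 Q0 α Cg a A σ.1 σ.2 x) ''
          {x : LVec N H | FeasX R Gp Gcap T PTDF x}) + 2 * M * dist τ σ
      simp only at h3
      linarith
  refine ⟨hLip.continuousOn, ?_⟩
  have hcomp : IsCompact (Tset τhat τlow) := by
    refine IsCompact.of_isClosed_subset
      ((isCompact_Icc (a := (0:ℝ)) (b := τhat)).prod (isCompact_Icc (a := τlow) (b := τhat))) ?_ ?_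
    · unfold Tset
      refine IsClosed.and ?_ (IsClosed.and ?_ (IsClosed.and ?_ ?_)) <;>
        exact isClosed_le (by fun_prop) (by fun_prop)
    · rintro τ ⟨h1, h2, h3, h4⟩
      exact ⟨⟨h1, h2⟩, ⟨h3, h4.trans h2⟩⟩
  obtain ⟨τ, hτ, hmax⟩ := hcomp.exists_isMaxOn
    ⟨(0, 0), le_rfl, hτhat.le, hτlow.le, le_rfl⟩ hLip.continuousOn
  exact ⟨τ, hτ, fun σ hσ => hmax hσ⟩
end

section
/- (Proposition 2: zero volumetric charges are socially optimal.) For every (τb, τs) ∈ 𝒯, V(τb, τs) ≤ V(0, 0); that is, the maximum of the optimal value function V over the rate set 𝒯 is attained at (τb, τs) = (0, 0), so max_{(τb,τs)∈𝒯} V(τb, τs) = V(0, 0). -/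
theorem lin_integral_le (p c t : ℝ) (hc : 0 < c) :
    (∫ m in (0:ℝ)..t, (p - c * m)) ≤ p ^ 2 / (2 * c) := by
  have h : (∫ m in (0:ℝ)..t, (p - c * m)) = p * t - c * (t ^ 2 / 2) := by
    rw [intervalIntegral.integral_sub
      (Continuous.intervalIntegrable (by fun_prop) _ _)
      (Continuous.intervalIntegrable (by fun_prop) _ _),
      intervalIntegral.integral_const_mul, integral_id]
    simp
    ring
  rw [h, le_div_iff₀ (by positivity)]
  nlinarith [sq_nonneg (p - c * t)]

/-- (Proposition 2: zero volumetric charges are socially optimal.) The maximum of the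
optimal value function `V` over the rate set `𝒯` is attained at `(0, 0)`. -/
theorem zero_volumetric_charge_socially_optimal
    (N K : ℕ) (hN : 1 ≤ N)
    (H : Fin N → Type) [∀ i, Fintype (H i)]
    (P0 Q0 α R Gp : Fin N → ℝ) (Cg : Fin N → ℝ → ℝ)
    (a A Gcap : (i : Fin N) → H i → ℝ)
    (T : Fin K → ℝ) (PTDF : Fin K → Fin N → ℝ)
    (hP0 : ∀ i, 0 < P0 i) (hQ0 : ∀ i, 0 < Q0 i)
    (hα0 : ∀ i, 0 < α i) (hα1 : ∀ i, α i < 1)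
    (hR : ∀ i, 0 < R i) (hGp : ∀ i, 0 ≤ Gp i)
    (hCg : ∀ i, ContDiff ℝ 1 (Cg i)) (hCgconv : ∀ i, StrictConvexOn ℝ Set.univ (Cg i))
    (hGcap : ∀ i (h : H i), 0 ≤ Gcap i h)
    (ha : ∀ i (h : H i), 0 < a i h) (hA : ∀ i (h : H i), 0 < A i h)
    (hT : ∀ k, 0 < T k)
    (τhat τlow : ℝ) (hτhat : 0 < τhat) (hτlow : τlow < 0) :
    ((0 : ℝ), (0 : ℝ)) ∈ Tset τhat τlow ∧
    ∀ τ ∈ Tset τhat τlow,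
      Vval P0 Q0 α Cg a A Gcap R Gp T PTDF τ ≤
        Vval P0 Q0 α Cg a A Gcap R Gp T PTDF ((0 : ℝ), (0 : ℝ)) := by
  refine ⟨⟨le_rfl, hτhat.le, hτlow.le, le_rfl⟩, ?_⟩
  rintro ⟨τb, τs⟩ ⟨hb, -, -, hs⟩
  simp only at hb hs
  -- lower bounds of the backup costs on the compact capacity intervals
  have hlow : ∀ i, ∃ m : ℝ, ∀ t ∈ Set.Icc 0 (Gp i), m ≤ Cg i t := by
    intro i
    obtain ⟨m, hm⟩ := (isCompact_Icc (a := (0:ℝ)) (b := Gp i)).bddBelow_image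
      (hCg i).continuous.continuousOn
    exact ⟨m, fun t ht => hm ⟨t, ht, rfl⟩⟩
  choose m hm using hlow
  unfold Vval
  apply csSup_le
  · refine ⟨_, ⟨fun _ => 0, R, fun _ => 0, fun _ => 0, fun _ => 0, fun _ _ => 0, fun _ => 0⟩,
      ?_, rfl⟩
    refine ⟨?_, ?_, ?_, ?_, ?_, ?_, ?_, ?_, ?_, ?_, ?_, ?_⟩ <;>
      simp [hGp, hGcap, fun i => (hR i).le, fun k => (hT k).le]
  · rintro _ ⟨x, hx, rfl⟩
    have key : surplus P0 Q0 α Cg a A τb τs x ≤ surplus P0 Q0 α Cg a A 0 0 x := by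
      obtain ⟨_, _, hzs, _, _, hg, _, _, _, hy, _, hbal⟩ := hx
      have e1 : ∑ i, x.d i = ∑ i, ∑ h, x.gih i h + ∑ i, x.zs i - ∑ i, x.zb i := by
        have : ∑ i, x.d i = ∑ i, ((∑ h, x.gih i h) + x.zs i - x.zb i - x.y i) :=
          Finset.sum_congr rfl fun i _ => by linarith [hbal i]
        rw [this]
        simp only [Finset.sum_sub_distrib, Finset.sum_add_distrib, hy]
        ring
      have n1 : 0 ≤ ∑ i, ∑ h, x.gih i h :=
        Finset.sum_nonneg fun i _ => Finset.sum_nonneg fun h _ => hg i h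
      have n2 : 0 ≤ ∑ i, x.zs i := Finset.sum_nonneg fun i _ => hzs i
      unfold surplus
      simp only [Finset.sum_sub_distrib, Finset.sum_add_distrib, ← Finset.mul_sum, e1]
      nlinarith [mul_nonneg hb n1, mul_nonneg (sub_nonneg.2 hs) n2]
    refine key.trans (le_csSup ?_ ⟨x, hx, rfl⟩)
    refine ⟨∑ i, (P0 i ^ 2 / (2 * (P0 i / ((1 - α i) * Q0 i))))
      + ∑ i, (P0 i ^ 2 / (2 * (P0 i / (α i * Q0 i))) - m i) - 0, ?_⟩
    rintro _ ⟨z, ⟨_, _, _, _, hg0, hgih, _, hgp, _, _, _, _⟩, rfl⟩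
    simp only [surplus]
    refine sub_le_sub (add_le_add (Finset.sum_le_sum fun i _ => ?_)
      (Finset.sum_le_sum fun i _ => ?_)) (Finset.sum_nonneg fun i _ =>
        Finset.sum_nonneg fun h _ => ?_)
    · have := lin_integral_le (P0 i) (P0 i / ((1 - α i) * Q0 i)) (z.d i)
        (div_pos (hP0 i) (mul_pos (sub_pos.2 (hα1 i)) (hQ0 i)))
      linarith
    · have := lin_integral_le (P0 i) (P0 i / (α i * Q0 i)) (z.l i)
        (div_pos (hP0 i) (mul_pos (hα0 i) (hQ0 i)))
      linarith [hm i (z.g i) ⟨hg0 i, hgp i⟩]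
    · have := ha i h
      have := hA i h
      have := hgih i h
      positivity
end
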